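/- arXiv:1011.6401 — 2 statements merged into one kernel-verified Lean document; each statement's English description precedes it below -/
import Mathlib

section
/- Consider the vacuum plane wave metric on ℝ⁴ given by the pp-wave metric with 2H = y² − z². Then the real vector space of Killing tensors of g has dimension exactly 22, and its subspace of reducible Killing tensors has dimension exactly 21. -/
noncomputable section

/-- Points of (an open subset of) `ℝ⁴`, with coordinates `(u,v,y,z)` indexed by `0,1,2,3`. -/
abbrev Pt : Type := Fin 4 → ℝ

/-- Partial derivative of a function in the `i`-th coordinate direction. -/
def pd (i : Fin 4) (f : Pt → ℝ) (p : Pt) : ℝ :=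
  fderiv ℝ f p (Pi.single i 1)

/-- Kronecker delta `δ^i_a`. -/
def kd (i a : Fin 4) : ℝ := if i = a then 1 else 0

/-- Symmetrized product of Kronecker deltas, `δ_{(a}^i δ_{b)}^j`. -/
def sd (i j a b : Fin 4) : ℝ := (kd i a * kd j b + kd j a * kd i b) / 2

/-- Components of the pp-wave metric `g = -2 du dv - 2H du² + dy² + dz²`. -/
def ppMetric (H : Pt → ℝ) (p : Pt) (a b : Fin 4) : ℝ :=
  if a = 0 ∧ b = 0 then -2 * H p
  else if (a = 0 ∧ b = 1) ∨ (a = 1 ∧ b = 0) then -1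
  else if (a = 2 ∧ b = 2) ∨ (a = 3 ∧ b = 3) then 1
  else 0

/-- Christoffel symbols `Γ^d_{ab}` of the pp-wave metric:
`Γ^v_{uu} = H_{,u}`, `Γ^y_{uu} = Γ^v_{uy} = Γ^v_{yu} = H_{,y}`,
`Γ^z_{uu} = Γ^v_{uz} = Γ^v_{zu} = H_{,z}`, all others zero. -/
def Gamma (H : Pt → ℝ) (p : Pt) (d a b : Fin 4) : ℝ :=
  if d = 1 ∧ a = 0 ∧ b = 0 then pd 0 H p
  else if (d = 2 ∧ a = 0 ∧ b = 0) ∨ (d = 1 ∧ ((a = 0 ∧ b = 2) ∨ (a = 2 ∧ b = 0))) then pd 2 H p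
  else if (d = 3 ∧ a = 0 ∧ b = 0) ∨ (d = 1 ∧ ((a = 0 ∧ b = 3) ∨ (a = 3 ∧ b = 0))) then pd 3 H p
  else 0

/-- Covariant derivative of a covector field: `∇_a X_b = ∂_a X_b - Γ^d_{ab} X_d`. -/
def covD1 (H : Pt → ℝ) (X : Pt → Fin 4 → ℝ) (p : Pt) (a b : Fin 4) : ℝ :=
  pd a (fun q => X q b) p - ∑ d, Gamma H p d a b * X p d

/-- Covariant derivative of a 2-tensor field:
`∇_c T_{ab} = ∂_c T_{ab} - Γ^d_{ca} T_{db} - Γ^d_{cb} T_{ad}`. -/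
def covD2 (H : Pt → ℝ) (T : Pt → Fin 4 → Fin 4 → ℝ) (p : Pt) (c a b : Fin 4) : ℝ :=
  pd c (fun q => T q a b) p - ∑ d, Gamma H p d c a * T p d b
    - ∑ d, Gamma H p d c b * T p a d

/-- A Killing vector of the pp-wave metric on `U`, given by its covariant components:
a smooth covector field with `∇_{(a}X_{b)} = 0` on `U`. -/
def IsKillingVector (H : Pt → ℝ) (U : Set Pt) (X : Pt → Fin 4 → ℝ) : Prop :=
  (∀ a, ContDiffOn ℝ (⊤ : ℕ∞) (fun p => X p a) U) ∧
  ∀ p ∈ U, ∀ a b, covD1 H X p a b + covD1 H X p b a = 0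

/-- A (second order) Killing tensor of the pp-wave metric on `U`: a smooth symmetric
2-tensor field with `∇_{(c}K_{ab)} = 0` on `U`. -/
def IsKillingTensor (H : Pt → ℝ) (U : Set Pt) (K : Pt → Fin 4 → Fin 4 → ℝ) : Prop :=
  (∀ a b, ContDiffOn ℝ (⊤ : ℕ∞) (fun p => K p a b) U) ∧
  (∀ p a b, K p a b = K p b a) ∧
  ∀ p ∈ U, ∀ a b c,
    covD2 H K p c a b + covD2 H K p a b c + covD2 H K p b c a = 0

/-- A Killing tensor is reducible if (on `U`) it is a constant-coefficient linear combination
of the metric `g_{ab}` and finitely many symmetrized products `X_{(a}Y_{b)}` of Killing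
vectors `X`, `Y`. -/
def IsReducible (H : Pt → ℝ) (U : Set Pt) (K : Pt → Fin 4 → Fin 4 → ℝ) : Prop :=
  ∃ (c₀ : ℝ) (n : ℕ) (c : Fin n → ℝ) (X Y : Fin n → Pt → Fin 4 → ℝ),
    (∀ i, IsKillingVector H U (X i)) ∧ (∀ i, IsKillingVector H U (Y i)) ∧
    ∀ p ∈ U, ∀ a b, K p a b =
      c₀ * ppMetric H p a b + ∑ i, c i * ((X i p a * Y i p b + X i p b * Y i p a) / 2)


set_option linter.unusedSimpArgs false


structure DRing (R : Type) [CommRing R] where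
  U : Derivation ℤ R R
  V : Derivation ℤ R R
  Y : Derivation ℤ R R
  Z : Derivation ℤ R R
  y : R
  z : R
  VU : ∀ f, V (U f) = U (V f)
  VY : ∀ f, V (Y f) = Y (V f)
  VZ : ∀ f, V (Z f) = Z (V f)
  YU : ∀ f, Y (U f) = U (Y f)
  ZU : ∀ f, Z (U f) = U (Z f)
  ZY : ∀ f, Z (Y f) = Y (Z f)
  Uy : U y = 0
  Vy : V y = 0
  Yy : Y y = 1
  Zy : Z y = 0
  Uz : U z = 0
  Vz : V z = 0
  Yz : Y z = 0
  Zz : Z z = 1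
  tf : ∀ {x : R} (n : ℕ), n ≠ 0 → (n : R) * x = 0 → x = 0

set_option linter.unusedSimpArgs false

attribute [simp] DRing.VU DRing.VY DRing.VZ DRing.YU DRing.ZU DRing.ZY
attribute [simp] DRing.Uy DRing.Vy DRing.Yy DRing.Zy DRing.Uz DRing.Vz DRing.Yz DRing.Zz

structure KSol {R : Type} [CommRing R] (T : DRing R) where
  a : R
  b : R
  c : R
  p : R
  q : R
  s : R
  t : R
  g : R
  k : R
  l : R
  Va : T.V a = 0
  Vb : T.V b = - T.U a
  Vc : T.V c = - T.U b - (T.y * T.y - T.z * T.z) * T.U a - T.y * p + T.z * q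
  Vp : T.V p = T.Y a
  Vq : T.V q = T.Z a
  Vs : T.V s = T.Y b - T.U p + (T.y * T.y - T.z * T.z) * T.Y a
  Vt : T.V t = T.Z b - T.U q + (T.y * T.y - T.z * T.z) * T.Z a
  Vg : T.V g = T.Y p
  Vk : T.V k = T.Z p + T.Y q
  Vl : T.V l = T.Z q
  Uc : T.U c = (T.y * T.y - T.z * T.z) * T.V c - T.y * s + T.z * t
  Yc : T.Y c = T.U s - (T.y * T.y - T.z * T.z) * T.V s + 2 * T.y * g - T.z * k
  Zc : T.Z c = T.U t - (T.y * T.y - T.z * T.z) * T.V t + T.y * k - 2 * T.z * l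
  Ys : T.Y s = T.U g - (T.y * T.y - T.z * T.z) * T.V g
  ZsYt : T.Z s + T.Y t = T.U k - (T.y * T.y - T.z * T.z) * T.V k
  Zt : T.Z t = T.U l - (T.y * T.y - T.z * T.z) * T.V l
  Yg : T.Y g = 0
  Zg : T.Z g + T.Y k = 0
  Yl : T.Z k + T.Y l = 0
  Zl : T.Z l = 0

attribute [simp] KSol.Va KSol.Vb KSol.Vc KSol.Vp KSol.Vq KSol.Vs KSol.Vt KSol.Vg KSol.Vk KSol.Vl

namespace KSol
variable {R : Type} [CommRing R] {T : DRing R} (K : KSol T)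
@[simp] theorem d2 (D : Derivation ℤ R R) : D 2 = 0 := D.map_natCast 2
@[simp] theorem d3 (D : Derivation ℤ R R) : D 3 = 0 := D.map_natCast 3
@[simp] theorem d5 (D : Derivation ℤ R R) : D 5 = 0 := D.map_natCast 5

theorem step1 : T.Y (T.Y (T.Y K.a)) = 0 ∧ T.Y (T.Y (T.Z K.a)) = 0 ∧ T.Y (T.Z (T.Z K.a)) = 0 ∧
    T.Z (T.Z (T.Z K.a)) = 0 := by
  have e1 := congrArg (fun f => T.V (T.V f)) K.Yg
  have e2 := congrArg (fun f => T.V (T.V f)) K.Zg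
  have e3 := congrArg (fun f => T.V (T.V f)) K.Yl
  have e4 := congrArg (fun f => T.V (T.V f)) K.Zl
  simp at e1 e2 e3 e4
  exact ⟨e1, T.tf 3 (by norm_num) (by push_cast; linear_combination e2),
    T.tf 3 (by norm_num) (by push_cast; linear_combination e3), e4⟩

theorem step2 : T.U (T.Y (T.Y K.a)) = 0 ∧ T.U (T.Y (T.Z K.a)) = 0 ∧ T.U (T.Z (T.Z K.a)) = 0 := by
  have e1 := congrArg (fun f => T.V (T.V f)) K.Ys
  have e2 := congrArg (fun f => T.V (T.V f)) K.ZsYt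
  have e3 := congrArg (fun f => T.V (T.V f)) K.Zt
  simp at e1 e2 e3
  refine ⟨T.tf 3 (by norm_num) (by push_cast; linear_combination -e1),
    T.tf 6 (by norm_num) (by push_cast; linear_combination -e2),
    T.tf 3 (by norm_num) (by push_cast; linear_combination -e3)⟩

theorem step3 : T.Y (T.Y K.a) = 0 ∧ T.Y (T.Z K.a) = 0 ∧ T.Z (T.Z K.a) = 0 := by
  obtain ⟨f1, f2, f3, f4⟩ := K.step1
  obtain ⟨g1, g2, g3⟩ := K.step2
  have e1 := congrArg (fun f => T.Y (T.V (T.V f))) K.Yc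
  have e2 := congrArg (fun f => T.Z (T.V (T.V f))) K.Yc
  have e3 := congrArg (fun f => T.Z (T.V (T.V f))) K.Zc
  simp [f1, f2, f3, f4, g1, g2, g3] at e1 e2 e3
  refine ⟨T.tf 4 (by norm_num) (by push_cast; linear_combination -e1),
    T.tf 2 (by norm_num) (by push_cast; linear_combination e2),
    T.tf 4 (by norm_num) (by push_cast; linear_combination e3)⟩

theorem step4 : T.Y K.a = 0 ∧ T.Z K.a = 0 := by
  obtain ⟨g1, g2, g3⟩ := K.step3
  have e1 := congrArg (fun f => T.V (T.V f)) K.Yc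
  have e2 := congrArg (fun f => T.V (T.V f)) K.Zc
  have e1' := congrArg (fun f => T.U (T.V (T.V f))) K.Yc
  have e2' := congrArg (fun f => T.U (T.V (T.V f))) K.Zc
  have e3 := congrArg (fun f => T.Y (T.V (T.V f))) K.Uc
  have e4 := congrArg (fun f => T.Z (T.V (T.V f))) K.Uc
  simp [g1, g2, g3] at e1 e2 e1' e2' e3 e4
  have h1 : T.U (T.Y K.a) = 0 := T.tf 8 (by norm_num) (by push_cast; linear_combination -3*e3+e1')
  have h2 : T.U (T.Z K.a) = 0 := T.tf 8 (by norm_num) (by push_cast; linear_combination 3*e4-e2')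
  simp [h1, h2] at e1 e2
  exact ⟨e1, e2⟩

@[simp] theorem Ya : T.Y K.a = 0 := K.step4.1
@[simp] theorem Za : T.Z K.a = 0 := K.step4.2

theorem step5 : T.Y (T.Y K.p) = 0 ∧ 2 * T.Y (T.Z K.p) + T.Y (T.Y K.q) = 0 ∧
    T.Z (T.Z K.p) + 2 * T.Y (T.Z K.q) = 0 ∧ T.Z (T.Z K.q) = 0 ∧
    T.Y (T.Y K.b) = 2 * T.U (T.Y K.p) ∧ T.Y (T.Z K.b) = T.U (T.Z K.p) + T.U (T.Y K.q) ∧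
    T.Z (T.Z K.b) = 2 * T.U (T.Z K.q) := by
  have e1 := congrArg T.V K.Yg
  have e2 := congrArg T.V K.Zg
  have e3 := congrArg T.V K.Yl
  have e4 := congrArg T.V K.Zl
  have e5 := congrArg T.V K.Ys
  have e6 := congrArg T.V K.ZsYt
  have e7 := congrArg T.V K.Zt
  simp at e1 e2 e3 e4 e5 e6 e7
  refine ⟨by linear_combination e1, by linear_combination e2, by linear_combination e3,
    by linear_combination e4, by linear_combination e5, ?_, by linear_combination e7⟩
  rw [← sub_eq_zero]
  exact T.tf 2 (by norm_num) (by push_cast; linear_combination e6)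

theorem step6 : T.Y (T.Z K.p) = 0 ∧ T.Y (T.Z K.q) = 0 ∧ T.Y (T.Y K.q) = 0 ∧ T.Z (T.Z K.p) = 0 := by
  obtain ⟨f1, f2, f3, f4, f5, f6, f7⟩ := K.step5
  have f2' : T.Y (T.Y K.q) = -2 * T.Y (T.Z K.p) := by linear_combination f2
  have f3' : T.Z (T.Z K.p) = -2 * T.Y (T.Z K.q) := by linear_combination f3
  have g4 := congrArg T.Z f2
  have g5 := congrArg T.Y f3
  simp at g4 g5
  have k2 : T.Y (T.Y (T.Z K.q)) = 0 :=
    T.tf 3 (by norm_num) (by push_cast; linear_combination 2*g5 - g4)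
  have e2 := congrArg (fun f => T.Y (T.Y (T.V f))) K.Zc
  have e3 := congrArg (fun f => T.Z (T.Z (T.V f))) K.Yc
  simp [f2', f3', f4, f6, k2] at e2 e3
  have h1 : T.Y (T.Z K.p) = 0 := T.tf 2 (by norm_num) (by push_cast; linear_combination -e2)
  have h2 : T.Y (T.Z K.q) = 0 := T.tf 2 (by norm_num) (by push_cast; linear_combination e3)
  refine ⟨h1, h2, ?_, ?_⟩
  · rw [f2', h1, mul_zero]
  · rw [f3', h2, mul_zero]

@[simp] theorem YYp : T.Y (T.Y K.p) = 0 := K.step5.1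
@[simp] theorem YZp : T.Y (T.Z K.p) = 0 := K.step6.1
@[simp] theorem ZZp : T.Z (T.Z K.p) = 0 := K.step6.2.2.2
@[simp] theorem YYq : T.Y (T.Y K.q) = 0 := K.step6.2.2.1
@[simp] theorem YZq : T.Y (T.Z K.q) = 0 := K.step6.2.1
@[simp] theorem ZZq : T.Z (T.Z K.q) = 0 := K.step5.2.2.2.1
theorem YYb : T.Y (T.Y K.b) = 2 * T.U (T.Y K.p) := K.step5.2.2.2.2.1
theorem YZb : T.Y (T.Z K.b) = T.U (T.Z K.p) + T.U (T.Y K.q) := K.step5.2.2.2.2.2.1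
theorem ZZb : T.Z (T.Z K.b) = 2 * T.U (T.Z K.q) := K.step5.2.2.2.2.2.2

theorem step7 : T.U (T.U K.a) = 0 ∧ T.U (T.Y K.p) = 0 ∧ T.U (T.Z K.q) = 0 ∧
    2 * T.Y K.p = - T.U K.a ∧ 2 * T.Z K.q = - T.U K.a := by
  have e0 := congrArg (fun f => T.V (T.V f)) K.Uc
  have e1 := congrArg (fun f => T.Y (T.V f)) K.Yc
  have e1' := congrArg (fun f => T.U (T.Y (T.V f))) K.Yc
  have e2 := congrArg (fun f => T.Z (T.V f)) K.Zc
  have e2' := congrArg (fun f => T.U (T.Z (T.V f))) K.Zc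
  have e3 := congrArg (fun f => T.Y (T.Y (T.V f))) K.Uc
  have e3' := congrArg (fun f => T.Z (T.Z (T.V f))) K.Uc
  simp [K.YYb, K.YZb, K.ZZb] at e0 e1 e1' e2 e2' e3 e3'
  have e0' := congrArg T.U e0
  simp at e0'
  have h0 : T.U (T.Y K.p) = T.U (T.U K.a) := by
    rw [← sub_eq_zero]
    exact T.tf 8 (by norm_num) (by push_cast; linear_combination -2*e1'+3*e3)
  have h1 := congrArg (fun f => T.U (T.U f)) h0
  simp [e0'] at h1
  have h2 : T.U (T.U K.a) = 0 := 
    T.tf 4 (by norm_num) (by push_cast; linear_combination -e3 - 2 * h1)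
  have h3 : T.U (T.Y K.p) = 0 := h0.trans h2
  have h4 : T.U (T.Z K.q) = 0 := T.tf 8 (by norm_num) (by push_cast; linear_combination 2*e2'-3*e3'+8*h2)
  simp [h3, h4] at e1 e2
  refine ⟨h2, h3, h4, ?_, ?_⟩
  · rw [← sub_eq_zero]
    exact T.tf 2 (by norm_num) (by push_cast; linear_combination -e1)
  · rw [← sub_eq_zero]
    exact T.tf 2 (by norm_num) (by push_cast; linear_combination e2)

theorem step8 : T.Z K.p = 0 ∧ T.Y K.q = 0 := by
  have e1 := congrArg (fun f => T.Z (T.V f)) K.Yc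
  have e2 := congrArg (fun f => T.Y (T.V f)) K.Zc
  have e3 := congrArg (fun f => T.Y (T.Z (T.V f))) K.Uc
  simp [K.YZb, K.ZZb] at e1 e2 e3
  have e1' := congrArg T.U e1
  have e2' := congrArg T.U e2
  simp at e1' e2' e3
  have h1 : T.U (T.Z K.p) = T.U (T.Y K.q) := by
    rw [← sub_eq_zero]
    exact T.tf 4 (by norm_num) (by push_cast; linear_combination e1' + e2' - 3 * e3)
  have h2 := congrArg T.U h1
  have h3 : T.Z K.p + T.Y K.q = 0 := 
    T.tf 2 (by norm_num) (by push_cast; linear_combination e1 - e2 - h2)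
  have h4 := congrArg T.U h3
  simp at h4
  have h5 : T.U (T.Z K.p) = 0 := T.tf 2 (by norm_num) (by push_cast; linear_combination h4 + h1)
  have h6 : T.U (T.Y K.q) = 0 := h1.symm.trans h5
  simp [h5, h6] at e1 e2
  have h7 : T.Z K.p = 0 := T.tf 2 (by norm_num) (by push_cast; linear_combination -e2)
  refine ⟨h7, ?_⟩
  linear_combination h3 - h7

@[simp] theorem Zp : T.Z K.p = 0 := K.step8.1
@[simp] theorem Yq : T.Y K.q = 0 := K.step8.2
@[simp] theorem UYp : T.U (T.Y K.p) = 0 := K.step7.2.1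
@[simp] theorem Ua : T.U K.a = -2 * T.Y K.p := by linear_combination K.step7.2.2.2.1
@[simp] theorem Zq : T.Z K.q = T.Y K.p := by
  rw [← sub_eq_zero]
  exact T.tf 2 (by norm_num)
    (by push_cast; linear_combination K.step7.2.2.2.2 - K.step7.2.2.2.1)
@[simp] theorem YYb0 : T.Y (T.Y K.b) = 0 := by simp [K.YYb]
@[simp] theorem YZb0 : T.Y (T.Z K.b) = 0 := by simp [K.YZb]
@[simp] theorem ZZb0 : T.Z (T.Z K.b) = 0 := by simp [K.ZZb]
attribute [simp] KSol.Yg KSol.Zl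
@[simp] theorem Zg' : T.Z K.g = - T.Y K.k := by linear_combination K.Zg
@[simp] theorem Yl' : T.Y K.l = - T.Z K.k := by linear_combination K.Yl
@[simp] theorem YYk : T.Y (T.Y K.k) = 0 := by
  have := congrArg T.Y K.Zg
  rw [map_add, ← T.ZY] at this
  simpa using this
@[simp] theorem ZZk : T.Z (T.Z K.k) = 0 := by
  have := congrArg T.Z K.Yl
  rw [map_add, T.ZY] at this
  simpa using this
@[simp] theorem Ys' : T.Y K.s = T.U K.g - (T.y * T.y - T.z * T.z) * T.Y K.p := by
  simpa using K.Ys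
@[simp] theorem Zt' : T.Z K.t = T.U K.l - (T.y * T.y - T.z * T.z) * T.Y K.p := by
  simpa using K.Zt
@[simp] theorem Yt' : T.Y K.t = T.U K.k - T.Z K.s := by
  have := K.ZsYt
  simp at this
  linear_combination this
theorem YZs : T.Y (T.Z K.s) = - T.U (T.Y K.k) + 2 * T.z * T.Y K.p := by
  rw [← T.ZY, K.Ys']
  simp
  ring
theorem ZZs : T.Z (T.Z K.s) = 2 * T.U (T.Z K.k) + 2 * T.y * T.Y K.p := by
  have : T.Z (T.Y K.t) = T.Y (T.Z K.t) := by simp only [T.ZY]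
  rw [K.Yt', K.Zt'] at this
  simp at this
  linear_combination -this

@[simp] theorem UYZk : T.U (T.Y (T.Z K.k)) = 0 := by
  have e1 := congrArg T.Z K.YZs
  have e2 := congrArg T.Y K.ZZs
  simp at e1 e2
  exact T.tf 3 (by norm_num) (by push_cast; linear_combination e1 - e2)

theorem curl : 2 * T.U (T.Z K.s) - T.U (T.U K.k) + 2 * T.z * (T.Y K.b - T.U K.p)
   + 2 * T.y * (T.Z K.b - T.U K.q) - 3 * T.y * T.Y K.k - 3 * T.z * T.Z K.k - 2 * K.k = 0 := by
  have e1 := congrArg T.Z K.Yc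
  have e2 := congrArg T.Y K.Zc
  simp at e1 e2
  linear_combination e2 - e1

@[simp] theorem YZk : T.Y (T.Z K.k) = 0 := by
  have e1 := congrArg (fun f => T.Z (T.Y f)) K.curl
  simp [K.YZs, K.ZZs] at e1
  exact T.tf 8 (by norm_num) (by push_cast; linear_combination -e1)

theorem m2 : 2 * (T.Z K.b - T.U K.q) = 3 * T.U (T.U (T.Y K.k)) + 5 * T.Y K.k := by
  have e1 := congrArg T.Y K.curl
  simp [K.YZs, K.ZZs] at e1
  linear_combination e1
theorem m1 : 2 * (T.Y K.b - T.U K.p) = - 3 * T.U (T.U (T.Z K.k)) + 5 * T.Z K.k := by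
  have e1 := congrArg T.Z K.curl
  simp [K.YZs, K.ZZs] at e1
  linear_combination e1

@[simp] theorem Yp : T.Y K.p = 0 := by
  have e1 := congrArg (fun f => T.Y (T.Y (T.Y (T.Y f)))) K.Uc
  have e2 := congrArg (fun f => T.Y (T.Y (T.Y (T.U f)))) K.Yc
  rw [K.Vc] at e1
  simp [K.YZs] at e1 e2
  ring_nf at e1 e2
  exact T.tf 32 (by norm_num) (by push_cast; linear_combination e2 - e1)

theorem m1z : T.Y K.b = T.U K.p := by
  have r1 := congrArg (fun f => T.V (T.Y f)) K.Uc
  have r3 := congrArg T.V K.Yc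
  have r6 := congrArg (fun f => T.Y (T.Y (T.Y f))) K.Uc
  have r7 := congrArg (fun f => T.Y (T.Y (T.U f))) K.Yc
  rw [K.Vc] at r1 r6
  simp [K.YZs] at r1 r3 r6 r7
  have h : T.U (T.Y K.b) - T.U (T.U K.p) = 0 :=
    T.tf 8 (by norm_num) (by push_cast; linear_combination -6 * r3 + r7 - r6)
  have h' := congrArg T.U h
  have r3' := congrArg T.U r3
  simp at h' r3'
  linear_combination r1 - r3' - h'

theorem m2z : T.Z K.b = T.U K.q := by
  have r1 := congrArg (fun f => T.V (T.Z f)) K.Uc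
  have r3 := congrArg T.V K.Zc
  have r6 := congrArg (fun f => T.Z (T.Z (T.Z f))) K.Uc
  have r7 := congrArg (fun f => T.Z (T.Z (T.U f))) K.Zc
  rw [K.Vc] at r1 r6
  simp [K.YZs, K.ZZs] at r1 r3 r6 r7
  have h : T.U (T.Z K.b) - T.U (T.U K.q) = 0 :=
    T.tf 8 (by norm_num) (by push_cast; linear_combination -6 * r3 - r7 + r6)
  have h' := congrArg T.U h
  have r3' := congrArg T.U r3
  simp at h' r3'
  linear_combination r3' - r1 + h'

@[simp] theorem Yk : T.Y K.k = 0 := by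
  have e := K.m2
  have e1 := congrArg (fun f => T.Y (T.Y (T.Z f))) K.Uc
  have e2 := congrArg (fun f => T.Y (T.Z (T.U f))) K.Yc
  have e6 := congrArg T.V K.Zc
  rw [K.Vc] at e1
  simp [K.YZs, K.m1z, K.m2z] at e e1 e2 e6
  have e' := congrArg T.U e
  simp at e'
  have h : T.U (T.Y K.k) = 0 :=
    T.tf 16 (by norm_num) (by push_cast; linear_combination 3 * e2 - 3 * e1 + e' - 6 * e6)
  simp [h] at e
  exact T.tf 5 (by norm_num) (by push_cast; linear_combination -e)

@[simp] theorem Zk : T.Z K.k = 0 := by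
  have e := K.m1
  have e1 := congrArg (fun f => T.Z (T.Y (T.Z f))) K.Uc
  have e2 := congrArg (fun f => T.Z (T.Z (T.U f))) K.Yc
  have e6 := congrArg T.V K.Yc
  rw [K.Vc] at e1
  simp [K.ZZs, K.m1z, K.m2z] at e e1 e2 e6
  have e' := congrArg T.U e
  simp at e'
  have h : T.U (T.Z K.k) = 0 :=
    T.tf 16 (by norm_num) (by push_cast; linear_combination 3 * e1 - 3 * e2 - 2 * e' - 6 * e6)
  simp [h] at e
  exact T.tf 5 (by norm_num) (by push_cast; linear_combination -e)

@[simp] theorem Vs0 : T.Y K.b - T.U K.p = 0 := by simp [K.m1z]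
@[simp] theorem Vt0 : T.Z K.b - T.U K.q = 0 := by simp [K.m2z]

theorem fin_a : T.V K.a = 0 ∧ T.Y K.a = 0 ∧ T.Z K.a = 0 ∧ T.U K.a = 0 := by simp
theorem fin_p : T.V K.p = 0 ∧ T.Y K.p = 0 ∧ T.Z K.p = 0 := by simp
theorem fin_q : T.V K.q = 0 ∧ T.Y K.q = 0 ∧ T.Z K.q = 0 := by simp
theorem fin_g : T.V K.g = 0 ∧ T.Y K.g = 0 ∧ T.Z K.g = 0 := by simp
theorem fin_k : T.V K.k = 0 ∧ T.Y K.k = 0 ∧ T.Z K.k = 0 := by simp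
theorem fin_l : T.V K.l = 0 ∧ T.Y K.l = 0 ∧ T.Z K.l = 0 := by simp
theorem fin_b : T.V K.b = 0 ∧ T.V (T.Y K.b) = 0 ∧ T.Y (T.Y K.b) = 0 ∧ T.Y (T.Z K.b) = 0 ∧
  T.V (T.Z K.b) = 0 ∧ T.Z (T.Z K.b) = 0 := by simp
theorem fin_s : T.V K.s = 0 ∧ T.V (T.Y K.s) = 0 ∧ T.Y (T.Y K.s) = 0 ∧ T.Y (T.Z K.s) = 0 ∧
  T.V (T.Z K.s) = 0 ∧ T.Z (T.Z K.s) = 0 := by simp [K.YZs, K.ZZs]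
theorem fin_t : T.V K.t = 0 ∧ T.V (T.Y K.t) = 0 ∧ T.Y (T.Y K.t) = 0 ∧ T.Y (T.Z K.t) = 0 ∧
  T.V (T.Z K.t) = 0 ∧ T.Z (T.Z K.t) = 0 := by simp [K.YZs]
theorem fin_c1 : T.V (T.V K.c) = 0 ∧ T.Y (T.V K.c) = 0 ∧ T.Z (T.V K.c) = 0 := by
  have e1 := congrArg T.V K.Yc
  have e2 := congrArg T.V K.Zc
  simp [K.m1z, K.m2z] at e1 e2
  simp [K.m1z, K.m2z, e1, e2]
theorem fin_c2 : T.Y (T.Y (T.Y K.c)) = 0 ∧ T.Y (T.Y (T.Z K.c)) = 0 ∧ T.Y (T.Z (T.Z K.c)) = 0 ∧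
    T.Z (T.Z (T.Z K.c)) = 0 := by
  have e1 := congrArg (fun f => T.Y (T.Y f)) K.Yc
  have e2 := congrArg (fun f => T.Y (T.Z f)) K.Yc
  have e3 := congrArg (fun f => T.Y (T.Z f)) K.Zc
  have e4 := congrArg (fun f => T.Z (T.Z f)) K.Zc
  simp [K.YZs, K.ZZs] at e1 e2 e3 e4
  simp [e1, e2, e3, e4]

end KSol

section

theorem pd_add {f g : Pt → ℝ} {p : Pt} (i : Fin 4) (hf : DifferentiableAt ℝ f p)
    (hg : DifferentiableAt ℝ g p) : pd i (fun q => f q + g q) p = pd i f p + pd i g p := by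
  unfold pd
  rw [fderiv_fun_add hf hg]
  rfl

theorem pd_mul {f g : Pt → ℝ} {p : Pt} (i : Fin 4) (hf : DifferentiableAt ℝ f p)
    (hg : DifferentiableAt ℝ g p) :
    pd i (fun q => f q * g q) p = f p * pd i g p + g p * pd i f p := by
  unfold pd
  rw [fderiv_fun_mul hf hg]
  simp

theorem pd_const (i : Fin 4) (c : ℝ) (p : Pt) : pd i (fun _ => c) p = 0 := by
  unfold pd
  simp

theorem pd_const_mul {f : Pt → ℝ} {p : Pt} (i : Fin 4) (c : ℝ) (hf : DifferentiableAt ℝ f p) :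
    pd i (fun q => c * f q) p = c * pd i f p := by
  rw [pd_mul i (differentiableAt_const c) hf, pd_const]
  ring

theorem pd_comp_coord (i j : Fin 4) {φ : ℝ → ℝ} {φ' : ℝ} {p : Pt} (h : HasDerivAt φ φ' (p j)) :
    pd i (fun q => φ (q j)) p = if i = j then φ' else 0 := by
  have h1 : HasFDerivAt (fun q : Pt => q j) (ContinuousLinearMap.proj (R := ℝ) (φ := fun _ : Fin 4 => ℝ) j) p :=
    hasFDerivAt_apply j p
  have h2 := h.comp_hasFDerivAt p h1
  unfold pd
  have h3 : fderiv ℝ (fun q : Pt => φ (q j)) p = _ := h2.fderiv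
  rw [h3]
  by_cases hij : i = j
  · subst hij; simp
  · simp [hij, Ne.symm hij]

theorem pd_coord (i j : Fin 4) (p : Pt) : pd i (fun q => q j) p = if i = j then 1 else 0 :=
  pd_comp_coord i j (hasDerivAt_id (p j))

theorem pd_contDiff {f : Pt → ℝ} (i : Fin 4) (hf : ContDiff ℝ (⊤ : ℕ∞) f) :
    ContDiff ℝ (⊤ : ℕ∞) (pd i f) := by
  unfold pd
  have : ContDiff ℝ (⊤ : ℕ∞) (fderiv ℝ f) := hf.fderiv_right (by norm_cast)
  exact this.clm_apply contDiff_const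

theorem pd_comm {f : Pt → ℝ} (i j : Fin 4) (hf : ContDiff ℝ (⊤ : ℕ∞) f) (p : Pt) :
    pd i (pd j f) p = pd j (pd i f) p := by
  have hd : DifferentiableAt ℝ (fderiv ℝ f) p :=
    ((hf.fderiv_right (m := 1) (by norm_cast)).differentiable (by norm_num)).differentiableAt
  have key : ∀ i j, pd i (pd j f) p = fderiv ℝ (fderiv ℝ f) p (Pi.single i 1) (Pi.single j 1) := by
    intro i j
    unfold pd
    rw [fderiv_clm_apply hd (differentiableAt_const _)]
    simp
  rw [key, key]
  have hs : IsSymmSndFDerivAt ℝ f p := by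
    apply ContDiffAt.isSymmSndFDerivAt (n := (⊤ : ℕ∞)) hf.contDiffAt
    simp only [minSmoothness_of_isRCLikeNormedField]
    exact WithTop.coe_le_coe.2 (le_top (a := (2 : ℕ∞)))
  exact hs _ _

/-- The ring of smooth functions. -/
def Sm : Subring (Pt → ℝ) where
  carrier := {f | ContDiff ℝ (⊤ : ℕ∞) f}
  mul_mem' := by
    intro a b ha hb
    simp only [Set.mem_ofPred_eq] at ha hb ⊢
    exact ha.mul hb
  one_mem' := by
    simp only [Set.mem_ofPred_eq]
    exact contDiff_const
  add_mem' := by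
    intro a b ha hb
    simp only [Set.mem_ofPred_eq] at ha hb ⊢
    exact ha.add hb
  zero_mem' := by
    simp only [Set.mem_ofPred_eq]
    exact contDiff_const
  neg_mem' := by
    intro a ha
    simp only [Set.mem_ofPred_eq] at ha ⊢
    exact ha.neg

theorem mem_Sm {f : Pt → ℝ} : f ∈ Sm ↔ ContDiff ℝ (⊤ : ℕ∞) f := Iff.rfl

theorem Sm_diff (f : Sm) (p : Pt) : DifferentiableAt ℝ f.1 p :=
  (ContDiff.differentiable (mem_Sm.1 f.2) (by simp)).differentiableAt

/-- Partial derivatives as derivations. -/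
def Dr (i : Fin 4) : Derivation ℤ Sm Sm :=
  Derivation.mk'
    (AddMonoidHom.toIntLinearMap
      { toFun := fun f => ⟨pd i f.1, mem_Sm.2 (pd_contDiff i (mem_Sm.1 f.2))⟩
        map_zero' := by
          ext p
          exact pd_const i 0 p
        map_add' := by
          intro f g
          ext p
          exact pd_add i (Sm_diff f p) (Sm_diff g p) })
    (by
      intro f g
      ext p
      exact pd_mul i (Sm_diff f p) (Sm_diff g p))

theorem Dr_apply (i : Fin 4) (f : Sm) (p : Pt) : (Dr i f).1 p = pd i f.1 p := rfl

def crd (i : Fin 4) : Sm := ⟨fun q => q i, mem_Sm.2 (contDiff_apply ℝ ℝ i)⟩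

theorem Dr_comm (i j : Fin 4) (f : Sm) : Dr i (Dr j f) = Dr j (Dr i f) := by
  ext p
  exact pd_comm i j (mem_Sm.1 f.2) p

theorem Dr_crd (i j : Fin 4) : Dr i (crd j) = if i = j then 1 else 0 := by
  ext p
  rw [Dr_apply]
  refine (pd_coord i j p).trans ?_
  split_ifs <;> rfl

def TT : DRing Sm where
  U := Dr 0
  V := Dr 1
  Y := Dr 2
  Z := Dr 3
  y := crd 2
  z := crd 3
  VU := Dr_comm 1 0
  VY := Dr_comm 1 2
  VZ := Dr_comm 1 3
  YU := Dr_comm 2 0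
  ZU := Dr_comm 3 0
  ZY := Dr_comm 3 2
  Uy := by rw [Dr_crd]; rfl
  Vy := by rw [Dr_crd]; rfl
  Yy := by rw [Dr_crd]; rfl
  Zy := by rw [Dr_crd]; rfl
  Uz := by rw [Dr_crd]; rfl
  Vz := by rw [Dr_crd]; rfl
  Yz := by rw [Dr_crd]; rfl
  Zz := by rw [Dr_crd]; rfl
  tf := by
    intro x n hn h
    ext p
    have := congrFun (congrArg Subtype.val h) p
    have h2 : (n : ℝ) * x.1 p = 0 := by simpa using this
    rcases mul_eq_zero.1 h2 with h3 | h3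
    · exact absurd (by exact_mod_cast h3) hn
    · exact h3

/-- The function `H` of the plane wave. -/
def HH : Pt → ℝ := fun p => ((p 2) ^ 2 - (p 3) ^ 2) / 2

theorem pdHH (i : Fin 4) (p : Pt) :
    pd i HH p = if i = 2 then p 2 else if i = 3 then - p 3 else 0 := by
  have e : HH = fun q => (fun q : Pt => (q 2) ^ 2 / 2) q + (fun q : Pt => -(q 3) ^ 2 / 2) q := by
    funext q; simp [HH]; ring
  have h2 : HasDerivAt (fun x : ℝ => x ^ 2 / 2) (p 2) (p 2) := by
    exact ((hasDerivAt_pow 2 (p 2)).div_const 2).congr_deriv (by norm_num)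
  have h3 : HasDerivAt (fun x : ℝ => - x ^ 2 / 2) (- p 3) (p 3) := by
    exact ((hasDerivAt_pow 2 (p 3)).neg.div_const 2).congr_deriv (by push_cast; ring)
  rw [e, pd_add i (by fun_prop) (by fun_prop), pd_comp_coord i 2 h2, pd_comp_coord i 3 h3]
  fin_cases i <;> simp

section
variable {K : Pt → Fin 4 → Fin 4 → ℝ} (hK : IsKillingTensor HH Set.univ K)

def kc (a b : Fin 4) : Sm := ⟨fun p => K p a b, mem_Sm.2 (contDiffOn_univ.1 (hK.1 a b))⟩

theorem kc_eq (p : Pt) (a b c : Fin 4) :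
    (Dr c (kc hK a b)).1 p + (Dr a (kc hK b c)).1 p + (Dr b (kc hK c a)).1 p
    = 2 * ((∑ d, Gamma HH p d c a * (kc hK d b).1 p) + (∑ d, Gamma HH p d c b * (kc hK d a).1 p)
      + ∑ d, Gamma HH p d a b * (kc hK d c).1 p) := by
  have h := hK.2.2 p trivial a b c
  have hG : ∀ d a b, Gamma HH p d a b = Gamma HH p d b a := by
    intro d a b
    unfold Gamma
    congr 1
    · simp; tauto
    · congr 1
      · simp; tauto
      · congr 1; simp; tauto
  have hs := hK.2.1 p
  unfold covD2 at h
  simp only [Dr_apply]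
  have e1 : ∀ a b, (kc hK a b).1 p = K p a b := fun _ _ => rfl
  have e2 : ∀ a b, (kc hK a b).1 = fun p => K p a b := fun _ _ => rfl
  simp only [e1]
  simp only [e2]
  simp only [Fin.sum_univ_four] at h ⊢
  simp only [hG _ b a, hG _ a c, hG _ b c, hs b, hs c, hs a] at h ⊢
  linarith

theorem kc_symm (a b : Fin 4) : kc hK a b = kc hK b a := by
  ext p
  exact hK.2.1 p a b

end
end

section
section
variable {K : Pt → Fin 4 → Fin 4 → ℝ} (hK : IsKillingTensor HH Set.univ K)

theorem cv_000 : TT.U (kc hK 0 0)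
    = 2 * (TT.y * kc hK 0 2) + (-2) * (TT.z * kc hK 0 3) := by
  ext p
  have h := kc_eq hK p 0 0 0
  simp [Gamma, pdHH, Fin.sum_univ_four, kc_symm hK 1 0, kc_symm hK 2 0, kc_symm hK 3 0,
    kc_symm hK 2 1, kc_symm hK 3 1, kc_symm hK 3 2] at h
  change (Dr 0 (kc hK 0 0)).1 p
    = 2 * (p 2 * (kc hK 0 2).1 p) + (-2) * (p 3 * (kc hK 0 3).1 p)
  linarith

theorem cv_001 : TT.V (kc hK 0 0) + 2 * TT.U (kc hK 0 1)
    = 2 * (TT.y * kc hK 1 2) + (-2) * (TT.z * kc hK 1 3) := by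
  ext p
  have h := kc_eq hK p 0 0 1
  simp [Gamma, pdHH, Fin.sum_univ_four, kc_symm hK 1 0, kc_symm hK 2 0, kc_symm hK 3 0,
    kc_symm hK 2 1, kc_symm hK 3 1, kc_symm hK 3 2] at h
  change (Dr 1 (kc hK 0 0)).1 p + 2 * (Dr 0 (kc hK 0 1)).1 p
    = 2 * (p 2 * (kc hK 1 2).1 p) + (-2) * (p 3 * (kc hK 1 3).1 p)
  linarith

theorem cv_002 : TT.Y (kc hK 0 0) + 2 * TT.U (kc hK 0 2)
    = 4 * (TT.y * kc hK 0 1) + 2 * (TT.y * kc hK 2 2) + (-2) * (TT.z * kc hK 2 3) := by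
  ext p
  have h := kc_eq hK p 0 0 2
  simp [Gamma, pdHH, Fin.sum_univ_four, kc_symm hK 1 0, kc_symm hK 2 0, kc_symm hK 3 0,
    kc_symm hK 2 1, kc_symm hK 3 1, kc_symm hK 3 2] at h
  change (Dr 2 (kc hK 0 0)).1 p + 2 * (Dr 0 (kc hK 0 2)).1 p
    = 4 * (p 2 * (kc hK 0 1).1 p) + 2 * (p 2 * (kc hK 2 2).1 p) + (-2) * (p 3 * (kc hK 2 3).1 p)
  linarith

theorem cv_003 : TT.Z (kc hK 0 0) + 2 * TT.U (kc hK 0 3)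
    = (-4) * (TT.z * kc hK 0 1) + 2 * (TT.y * kc hK 2 3) + (-2) * (TT.z * kc hK 3 3) := by
  ext p
  have h := kc_eq hK p 0 0 3
  simp [Gamma, pdHH, Fin.sum_univ_four, kc_symm hK 1 0, kc_symm hK 2 0, kc_symm hK 3 0,
    kc_symm hK 2 1, kc_symm hK 3 1, kc_symm hK 3 2] at h
  change (Dr 3 (kc hK 0 0)).1 p + 2 * (Dr 0 (kc hK 0 3)).1 p
    = (-4) * (p 3 * (kc hK 0 1).1 p) + 2 * (p 2 * (kc hK 2 3).1 p) + (-2) * (p 3 * (kc hK 3 3).1 p)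
  linarith

theorem cv_011 : TT.U (kc hK 1 1) + 2 * TT.V (kc hK 0 1)
    = 0 := by
  ext p
  have h := kc_eq hK p 0 1 1
  simp [Gamma, pdHH, Fin.sum_univ_four, kc_symm hK 1 0, kc_symm hK 2 0, kc_symm hK 3 0,
    kc_symm hK 2 1, kc_symm hK 3 1, kc_symm hK 3 2] at h
  change (Dr 0 (kc hK 1 1)).1 p + 2 * (Dr 1 (kc hK 0 1)).1 p
    = 0
  linarith

theorem cv_012 : TT.U (kc hK 1 2) + TT.V (kc hK 0 2) + TT.Y (kc hK 0 1)
    = 2 * (TT.y * kc hK 1 1) := by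
  ext p
  have h := kc_eq hK p 0 1 2
  simp [Gamma, pdHH, Fin.sum_univ_four, kc_symm hK 1 0, kc_symm hK 2 0, kc_symm hK 3 0,
    kc_symm hK 2 1, kc_symm hK 3 1, kc_symm hK 3 2] at h
  change (Dr 0 (kc hK 1 2)).1 p + (Dr 1 (kc hK 0 2)).1 p + (Dr 2 (kc hK 0 1)).1 p
    = 2 * (p 2 * (kc hK 1 1).1 p)
  linarith

theorem cv_013 : TT.U (kc hK 1 3) + TT.V (kc hK 0 3) + TT.Z (kc hK 0 1)
    = (-2) * (TT.z * kc hK 1 1) := by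
  ext p
  have h := kc_eq hK p 0 1 3
  simp [Gamma, pdHH, Fin.sum_univ_four, kc_symm hK 1 0, kc_symm hK 2 0, kc_symm hK 3 0,
    kc_symm hK 2 1, kc_symm hK 3 1, kc_symm hK 3 2] at h
  change (Dr 0 (kc hK 1 3)).1 p + (Dr 1 (kc hK 0 3)).1 p + (Dr 3 (kc hK 0 1)).1 p
    = (-2) * (p 3 * (kc hK 1 1).1 p)
  linarith

theorem cv_022 : TT.U (kc hK 2 2) + 2 * TT.Y (kc hK 0 2)
    = 4 * (TT.y * kc hK 1 2) := by
  ext p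
  have h := kc_eq hK p 0 2 2
  simp [Gamma, pdHH, Fin.sum_univ_four, kc_symm hK 1 0, kc_symm hK 2 0, kc_symm hK 3 0,
    kc_symm hK 2 1, kc_symm hK 3 1, kc_symm hK 3 2] at h
  change (Dr 0 (kc hK 2 2)).1 p + 2 * (Dr 2 (kc hK 0 2)).1 p
    = 4 * (p 2 * (kc hK 1 2).1 p)
  linarith

theorem cv_023 : TT.U (kc hK 2 3) + TT.Y (kc hK 0 3) + TT.Z (kc hK 0 2)
    = 2 * (TT.y * kc hK 1 3) + (-2) * (TT.z * kc hK 1 2) := by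
  ext p
  have h := kc_eq hK p 0 2 3
  simp [Gamma, pdHH, Fin.sum_univ_four, kc_symm hK 1 0, kc_symm hK 2 0, kc_symm hK 3 0,
    kc_symm hK 2 1, kc_symm hK 3 1, kc_symm hK 3 2] at h
  change (Dr 0 (kc hK 2 3)).1 p + (Dr 2 (kc hK 0 3)).1 p + (Dr 3 (kc hK 0 2)).1 p
    = 2 * (p 2 * (kc hK 1 3).1 p) + (-2) * (p 3 * (kc hK 1 2).1 p)
  linarith

theorem cv_033 : TT.U (kc hK 3 3) + 2 * TT.Z (kc hK 0 3)
    = (-4) * (TT.z * kc hK 1 3) := by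
  ext p
  have h := kc_eq hK p 0 3 3
  simp [Gamma, pdHH, Fin.sum_univ_four, kc_symm hK 1 0, kc_symm hK 2 0, kc_symm hK 3 0,
    kc_symm hK 2 1, kc_symm hK 3 1, kc_symm hK 3 2] at h
  change (Dr 0 (kc hK 3 3)).1 p + 2 * (Dr 3 (kc hK 0 3)).1 p
    = (-4) * (p 3 * (kc hK 1 3).1 p)
  linarith

theorem cv_111 : TT.V (kc hK 1 1)
    = 0 := by
  ext p
  have h := kc_eq hK p 1 1 1
  simp [Gamma, pdHH, Fin.sum_univ_four, kc_symm hK 1 0, kc_symm hK 2 0, kc_symm hK 3 0,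
    kc_symm hK 2 1, kc_symm hK 3 1, kc_symm hK 3 2] at h
  change (Dr 1 (kc hK 1 1)).1 p
    = 0
  linarith

theorem cv_112 : TT.Y (kc hK 1 1) + 2 * TT.V (kc hK 1 2)
    = 0 := by
  ext p
  have h := kc_eq hK p 1 1 2
  simp [Gamma, pdHH, Fin.sum_univ_four, kc_symm hK 1 0, kc_symm hK 2 0, kc_symm hK 3 0,
    kc_symm hK 2 1, kc_symm hK 3 1, kc_symm hK 3 2] at h
  change (Dr 2 (kc hK 1 1)).1 p + 2 * (Dr 1 (kc hK 1 2)).1 p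
    = 0
  linarith

theorem cv_113 : TT.Z (kc hK 1 1) + 2 * TT.V (kc hK 1 3)
    = 0 := by
  ext p
  have h := kc_eq hK p 1 1 3
  simp [Gamma, pdHH, Fin.sum_univ_four, kc_symm hK 1 0, kc_symm hK 2 0, kc_symm hK 3 0,
    kc_symm hK 2 1, kc_symm hK 3 1, kc_symm hK 3 2] at h
  change (Dr 3 (kc hK 1 1)).1 p + 2 * (Dr 1 (kc hK 1 3)).1 p
    = 0
  linarith

theorem cv_122 : TT.V (kc hK 2 2) + 2 * TT.Y (kc hK 1 2)
    = 0 := by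
  ext p
  have h := kc_eq hK p 1 2 2
  simp [Gamma, pdHH, Fin.sum_univ_four, kc_symm hK 1 0, kc_symm hK 2 0, kc_symm hK 3 0,
    kc_symm hK 2 1, kc_symm hK 3 1, kc_symm hK 3 2] at h
  change (Dr 1 (kc hK 2 2)).1 p + 2 * (Dr 2 (kc hK 1 2)).1 p
    = 0
  linarith

theorem cv_123 : TT.V (kc hK 2 3) + TT.Y (kc hK 1 3) + TT.Z (kc hK 1 2)
    = 0 := by
  ext p
  have h := kc_eq hK p 1 2 3
  simp [Gamma, pdHH, Fin.sum_univ_four, kc_symm hK 1 0, kc_symm hK 2 0, kc_symm hK 3 0,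
    kc_symm hK 2 1, kc_symm hK 3 1, kc_symm hK 3 2] at h
  change (Dr 1 (kc hK 2 3)).1 p + (Dr 2 (kc hK 1 3)).1 p + (Dr 3 (kc hK 1 2)).1 p
    = 0
  linarith

theorem cv_133 : TT.V (kc hK 3 3) + 2 * TT.Z (kc hK 1 3)
    = 0 := by
  ext p
  have h := kc_eq hK p 1 3 3
  simp [Gamma, pdHH, Fin.sum_univ_four, kc_symm hK 1 0, kc_symm hK 2 0, kc_symm hK 3 0,
    kc_symm hK 2 1, kc_symm hK 3 1, kc_symm hK 3 2] at h
  change (Dr 1 (kc hK 3 3)).1 p + 2 * (Dr 3 (kc hK 1 3)).1 p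
    = 0
  linarith

theorem cv_222 : TT.Y (kc hK 2 2)
    = 0 := by
  ext p
  have h := kc_eq hK p 2 2 2
  simp [Gamma, pdHH, Fin.sum_univ_four, kc_symm hK 1 0, kc_symm hK 2 0, kc_symm hK 3 0,
    kc_symm hK 2 1, kc_symm hK 3 1, kc_symm hK 3 2] at h
  change (Dr 2 (kc hK 2 2)).1 p
    = 0
  linarith

theorem cv_223 : TT.Z (kc hK 2 2) + 2 * TT.Y (kc hK 2 3)
    = 0 := by
  ext p
  have h := kc_eq hK p 2 2 3
  simp [Gamma, pdHH, Fin.sum_univ_four, kc_symm hK 1 0, kc_symm hK 2 0, kc_symm hK 3 0,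
    kc_symm hK 2 1, kc_symm hK 3 1, kc_symm hK 3 2] at h
  change (Dr 3 (kc hK 2 2)).1 p + 2 * (Dr 2 (kc hK 2 3)).1 p
    = 0
  linarith

theorem cv_233 : TT.Y (kc hK 3 3) + 2 * TT.Z (kc hK 2 3)
    = 0 := by
  ext p
  have h := kc_eq hK p 2 3 3
  simp [Gamma, pdHH, Fin.sum_univ_four, kc_symm hK 1 0, kc_symm hK 2 0, kc_symm hK 3 0,
    kc_symm hK 2 1, kc_symm hK 3 1, kc_symm hK 3 2] at h
  change (Dr 2 (kc hK 3 3)).1 p + 2 * (Dr 3 (kc hK 2 3)).1 p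
    = 0
  linarith

theorem cv_333 : TT.Z (kc hK 3 3)
    = 0 := by
  ext p
  have h := kc_eq hK p 3 3 3
  simp [Gamma, pdHH, Fin.sum_univ_four, kc_symm hK 1 0, kc_symm hK 2 0, kc_symm hK 3 0,
    kc_symm hK 2 1, kc_symm hK 3 1, kc_symm hK 3 2] at h
  change (Dr 3 (kc hK 3 3)).1 p
    = 0
  linarith

set_option maxHeartbeats 1000000 in
/-- The contravariant components of a Killing tensor, as a solution of the abstract system. -/
def toK : KSol TT where
  a := kc hK 1 1
  b := 2 * kc hK 0 1 - 2 * ((TT.y * TT.y - TT.z * TT.z) * kc hK 1 1)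
  c := kc hK 0 0 - 2 * ((TT.y * TT.y - TT.z * TT.z) * kc hK 0 1) +
    (TT.y * TT.y - TT.z * TT.z) * (TT.y * TT.y - TT.z * TT.z) * kc hK 1 1
  p := -2 * kc hK 1 2
  q := -2 * kc hK 1 3
  s := -2 * kc hK 0 2 + 2 * ((TT.y * TT.y - TT.z * TT.z) * kc hK 1 2)
  t := -2 * kc hK 0 3 + 2 * ((TT.y * TT.y - TT.z * TT.z) * kc hK 1 3)
  g := kc hK 2 2
  k := 2 * kc hK 2 3
  l := kc hK 3 3
  Va := cv_111 hK
  Vb := by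
    simp
    linear_combination cv_011 hK - 2*(TT.y * TT.y - TT.z * TT.z)*cv_111 hK
  Vc := by
    simp
    linear_combination cv_001 hK - (TT.y * TT.y - TT.z * TT.z)*cv_011 hK + (TT.y * TT.y - TT.z * TT.z)*(TT.y * TT.y - TT.z * TT.z)*cv_111 hK
  Vp := by
    simp
    linear_combination -cv_112 hK
  Vq := by
    simp
    linear_combination -cv_113 hK
  Vs := by
    simp
    linear_combination -2*cv_012 hK + (TT.y * TT.y - TT.z * TT.z)*cv_112 hK
  Vt := by
    simp
    linear_combination -2*cv_013 hK+(TT.y * TT.y - TT.z * TT.z)*cv_113 hK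
  Vg := by
    simp
    linear_combination cv_122 hK
  Vk := by
    simp
    linear_combination 2*cv_123 hK
  Vl := by
    simp
    linear_combination cv_133 hK
  Uc := by
    simp
    linear_combination cv_000 hK - (TT.y * TT.y - TT.z * TT.z)*cv_001 hK + (TT.y * TT.y - TT.z * TT.z)*(TT.y * TT.y - TT.z * TT.z)*cv_011 hK - (TT.y * TT.y - TT.z * TT.z)*(TT.y * TT.y - TT.z * TT.z)*(TT.y * TT.y - TT.z * TT.z)*cv_111 hK
  Yc := by
    simp
    linear_combination cv_002 hK - 2*(TT.y * TT.y - TT.z * TT.z)*cv_012 hK + (TT.y * TT.y - TT.z * TT.z)*(TT.y * TT.y - TT.z * TT.z)*cv_112 hK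
  Zc := by
    simp
    linear_combination cv_003 hK - 2*(TT.y * TT.y - TT.z * TT.z)*cv_013 hK + (TT.y * TT.y - TT.z * TT.z)*(TT.y * TT.y - TT.z * TT.z)*cv_113 hK
  Ys := by
    simp
    linear_combination -cv_022 hK + (TT.y * TT.y - TT.z * TT.z)*cv_122 hK
  ZsYt := by
    simp
    linear_combination -2*cv_023 hK+2*(TT.y * TT.y - TT.z * TT.z)*cv_123 hK
  Zt := by
    simp
    linear_combination -cv_033 hK+(TT.y * TT.y - TT.z * TT.z)*cv_133 hK
  Yg := cv_222 hK
  Zg := by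
    simp
    linear_combination cv_223 hK
  Yl := by
    simp
    linear_combination cv_233 hK
  Zl := cv_333 hK

end
end

section

theorem fderiv_expand (f : Pt → ℝ) (p w : Pt) :
    fderiv ℝ f p w = w 0 * pd 0 f p + w 1 * pd 1 f p + w 2 * pd 2 f p + w 3 * pd 3 f p := by
  have hw : w = w 0 • (Pi.single 0 1 : Pt) + w 1 • (Pi.single 1 1 : Pt)
      + w 2 • (Pi.single 2 1 : Pt) + w 3 • (Pi.single 3 1 : Pt) := by
    funext i
    fin_cases i <;> simp
  unfold pd
  conv_lhs => rw [hw]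
  simp only [map_add, map_smul, smul_eq_mul]

theorem int0 (f : Sm) (hV : TT.V f = 0) (hY : TT.Y f = 0) (hZ : TT.Z f = 0) (p : Pt) :
    f.1 p = f.1 ![p 0, 0, 0, 0] := by
  have h1 : ∀ q, pd 1 f.1 q = 0 := fun q => congrFun (congrArg Subtype.val hV) q
  have h2 : ∀ q, pd 2 f.1 q = 0 := fun q => congrFun (congrArg Subtype.val hY) q
  have h3 : ∀ q, pd 3 f.1 q = 0 := fun q => congrFun (congrArg Subtype.val hZ) q
  let γ : ℝ → Pt := fun t => ![p 0, t * p 1, t * p 2, t * p 3]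
  have hγ : ∀ t, HasDerivAt γ ![0, p 1, p 2, p 3] t := by
    intro t
    rw [hasDerivAt_pi]
    intro i
    fin_cases i
    · exact hasDerivAt_const t (p 0)
    · exact hasDerivAt_mul_const (p 1)
    · exact hasDerivAt_mul_const (p 2)
    · exact hasDerivAt_mul_const (p 3)
  have hd : ∀ t, HasDerivAt (fun t => f.1 (γ t)) 0 t := by
    intro t
    have := (Sm_diff f (γ t)).hasFDerivAt.comp_hasDerivAt t (hγ t)
    rw [fderiv_expand, h1, h2, h3] at this
    exact this.congr_deriv (by simp)
  have hc := is_const_of_deriv_eq_zero (fun t => (hd t).differentiableAt) (fun t => (hd t).deriv) 1 0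
  have e1 : γ 1 = p := by
    funext i; fin_cases i <;> simp [γ]
  have e0 : γ 0 = ![p 0, 0, 0, 0] := by
    funext i; fin_cases i <;> simp [γ]
  simp only [e1, e0] at hc
  exact hc

theorem slice0 (f : Sm) (h : TT.V f = 0 ∧ TT.Y f = 0 ∧ TT.Z f = 0) :
    ∃ α : ℝ, ∀ v y z : ℝ, f.1 ![0, v, y, z] = α :=
  ⟨f.1 ![0, 0, 0, 0], fun v y z => by
    have := int0 f h.1 h.2.1 h.2.2 ![0, v, y, z]
    simpa using this⟩

theorem slice1 (f : Sm) (h : TT.V f = 0 ∧ TT.V (TT.Y f) = 0 ∧ TT.Y (TT.Y f) = 0 ∧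
    TT.Y (TT.Z f) = 0 ∧ TT.V (TT.Z f) = 0 ∧ TT.Z (TT.Z f) = 0) :
    ∃ α β γ : ℝ, ∀ v y z : ℝ, f.1 ![0, v, y, z] = α + β * y + γ * z := by
  obtain ⟨h1, h2, h3, h4, h5, h6⟩ := h
  obtain ⟨β, hβ⟩ := slice0 (TT.Y f) ⟨h2, h3, by rw [TT.ZY]; exact h4⟩
  obtain ⟨γ, hγ⟩ := slice0 (TT.Z f) ⟨h5, h4, h6⟩
  obtain ⟨α, hα⟩ := slice0 (f - TT.y * TT.Y f - TT.z * TT.Z f) (by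
    simp [h1, h2, h3, h4, h5, h6])
  refine ⟨α, β, γ, fun v y z => ?_⟩
  have e1 := hα v y z
  have e2 := hβ v y z
  have e3 := hγ v y z
  have e4 : f.1 ![0, v, y, z] - y * (TT.Y f).1 ![0, v, y, z] - z * (TT.Z f).1 ![0, v, y, z] = α := e1
  rw [e2, e3] at e4
  linarith

theorem slice2 (f : Sm) (h0 : TT.V f = 0)
    (h : TT.Y (TT.Y (TT.Y f)) = 0 ∧ TT.Y (TT.Y (TT.Z f)) = 0 ∧ TT.Y (TT.Z (TT.Z f)) = 0 ∧
    TT.Z (TT.Z (TT.Z f)) = 0) :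
    ∃ α β γ δ ε ζ : ℝ, ∀ v y z : ℝ, f.1 ![0, v, y, z] =
      α + β * y + γ * z + δ * (y * y) + ε * (y * z) + ζ * (z * z) := by
  obtain ⟨h1, h2, h3, h4⟩ := h
  obtain ⟨a1, b1, c1, hh1⟩ := slice1 (TT.Y f) (by simp [h0, h1, h2, h3, h4])
  obtain ⟨a2, b2, c2, hh2⟩ := slice1 (TT.Z f) (by simp [h0, h1, h2, h3, h4])
  obtain ⟨a3, b3, c3, hh3⟩ := slice1 (f + f - TT.y * TT.Y f - TT.z * TT.Z f) (by
    simp [h0, h1, h2, h3, h4])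
  refine ⟨a3 / 2, (b3 + a1) / 2, (c3 + a2) / 2, b1 / 2, (c1 + b2) / 2, c2 / 2, fun v y z => ?_⟩
  have e1 := hh1 v y z
  have e2 := hh2 v y z
  have e4 : f.1 ![0, v, y, z] + f.1 ![0, v, y, z] - y * (TT.Y f).1 ![0, v, y, z]
    - z * (TT.Z f).1 ![0, v, y, z] = a3 + b3 * y + c3 * z := hh3 v y z
  rw [e1, e2] at e4
  linarith

theorem slice3 (f : Sm) (h0 : TT.V (TT.V f) = 0 ∧ TT.Y (TT.V f) = 0 ∧ TT.Z (TT.V f) = 0)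
    (h : TT.Y (TT.Y (TT.Y f)) = 0 ∧ TT.Y (TT.Y (TT.Z f)) = 0 ∧ TT.Y (TT.Z (TT.Z f)) = 0 ∧
    TT.Z (TT.Z (TT.Z f)) = 0) :
    ∃ α β γ δ ε ζ η : ℝ, ∀ v y z : ℝ, f.1 ![0, v, y, z] =
      α + β * y + γ * z + δ * (y * y) + ε * (y * z) + ζ * (z * z) + η * v := by
  obtain ⟨η, hη⟩ := slice0 (TT.V f) h0
  obtain ⟨g1, g2, g3⟩ := h0
  obtain ⟨h1, h2, h3, h4⟩ := h
  have vV : TT.V (crd 1) = 1 := by change Dr 1 (crd 1) = 1; rw [Dr_crd]; rfl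
  have vY : TT.Y (crd 1) = 0 := by change Dr 2 (crd 1) = 0; rw [Dr_crd]; rfl
  have vZ : TT.Z (crd 1) = 0 := by change Dr 3 (crd 1) = 0; rw [Dr_crd]; rfl
  obtain ⟨α, β, γ, δ, ε, ζ, hh⟩ := slice2 (f - crd 1 * TT.V f) (by simp [g1, g2, g3, vV])
    (by simp [g1, g2, g3, vV, vY, vZ, h1, h2, h3, h4])
  refine ⟨α, β, γ, δ, ε, ζ, η, fun v y z => ?_⟩
  have e1 := hη v y z
  have e4 : f.1 ![0, v, y, z] - v * (TT.V f).1 ![0, v, y, z] = _ := hh v y z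
  rw [e1] at e4
  linarith

/-- The restriction of a Killing tensor to `u = 0` depends on 22 parameters. -/
theorem slice_K {K : Pt → Fin 4 → Fin 4 → ℝ} (hK : IsKillingTensor HH Set.univ K) :
    ∃ a p q b0 b1 b2 g k l s0 s1 s2 t0 t1 t2 c0 c1 c2 c3 c4 c5 c6 : ℝ, ∀ v y z : ℝ,
      K ![0, v, y, z] 1 1 = a ∧
      -2 * K ![0, v, y, z] 1 2 = p ∧
      -2 * K ![0, v, y, z] 1 3 = q ∧
      2 * K ![0, v, y, z] 0 1 - 2 * ((y * y - z * z) * K ![0, v, y, z] 1 1) = b0 + b1 * y + b2 * z ∧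
      K ![0, v, y, z] 2 2 = g ∧
      2 * K ![0, v, y, z] 2 3 = k ∧
      K ![0, v, y, z] 3 3 = l ∧
      -2 * K ![0, v, y, z] 0 2 + 2 * ((y * y - z * z) * K ![0, v, y, z] 1 2)
        = s0 + s1 * y + s2 * z ∧
      -2 * K ![0, v, y, z] 0 3 + 2 * ((y * y - z * z) * K ![0, v, y, z] 1 3)
        = t0 + t1 * y + t2 * z ∧
      K ![0, v, y, z] 0 0 - 2 * ((y * y - z * z) * K ![0, v, y, z] 0 1)
        + (y * y - z * z) * (y * y - z * z) * K ![0, v, y, z] 1 1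
        = c0 + c1 * y + c2 * z + c3 * (y * y) + c4 * (y * z) + c5 * (z * z) + c6 * v := by
  obtain ⟨a, ha⟩ := slice0 _ ⟨(toK hK).fin_a.1, (toK hK).fin_a.2.1, (toK hK).fin_a.2.2.1⟩
  obtain ⟨p, hp⟩ := slice0 _ (toK hK).fin_p
  obtain ⟨q, hq⟩ := slice0 _ (toK hK).fin_q
  obtain ⟨b0, b1, b2, hb⟩ := slice1 _ (toK hK).fin_b
  obtain ⟨g, hg⟩ := slice0 _ (toK hK).fin_g
  obtain ⟨k, hk⟩ := slice0 _ (toK hK).fin_k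
  obtain ⟨l, hl⟩ := slice0 _ (toK hK).fin_l
  obtain ⟨s0, s1, s2, hs⟩ := slice1 _ (toK hK).fin_s
  obtain ⟨t0, t1, t2, ht⟩ := slice1 _ (toK hK).fin_t
  obtain ⟨c0, c1, c2, c3, c4, c5, c6, hc⟩ := slice3 _ (toK hK).fin_c1 (toK hK).fin_c2
  exact ⟨a, p, q, b0, b1, b2, g, k, l, s0, s1, s2, t0, t1, t2, c0, c1, c2, c3, c4, c5, c6,
    fun v y z => ⟨ha v y z, hp v y z, hq v y z, hb v y z, hg v y z, hk v y z, hl v y z,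
      hs v y z, ht v y z, hc v y z⟩⟩

/-- `K_vv` of a Killing tensor does not depend on `u`. -/
theorem K11_u {K : Pt → Fin 4 → Fin 4 → ℝ} (hK : IsKillingTensor HH Set.univ K) (p : Pt) (i : Fin 4) :
    pd i (fun q => K q 1 1) p = 0 := by
  obtain ⟨h1, h2, h3, h0⟩ := (toK hK).fin_a
  fin_cases i
  · exact congrFun (congrArg Subtype.val h0) p
  · exact congrFun (congrArg Subtype.val h1) p
  · exact congrFun (congrArg Subtype.val h2) p
  · exact congrFun (congrArg Subtype.val h3) p
end

section

theorem cdiff {f : Pt → ℝ} (h : ContDiffOn ℝ (⊤ : ℕ∞) f Set.univ) (p : Pt) :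
    DifferentiableAt ℝ f p :=
  (ContDiff.differentiable (contDiffOn_univ.1 h) (by simp)).differentiableAt

/-- The symmetrized product of two covector fields. -/
def sy (X Y : Pt → Fin 4 → ℝ) : Pt → Fin 4 → Fin 4 → ℝ :=
  fun p a b => (X p a * Y p b + X p b * Y p a) / 2

theorem covD2_sy {X Y : Pt → Fin 4 → ℝ}
    (hX : ∀ a, ContDiffOn ℝ (⊤ : ℕ∞) (fun p => X p a) Set.univ)
    (hY : ∀ a, ContDiffOn ℝ (⊤ : ℕ∞) (fun p => Y p a) Set.univ) (p : Pt) (c a b : Fin 4) :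
    covD2 HH (sy X Y) p c a b = (covD1 HH X p c a * Y p b + X p a * covD1 HH Y p c b
      + covD1 HH X p c b * Y p a + X p b * covD1 HH Y p c a) / 2 := by
  have e : (fun q => sy X Y q a b) = fun q => (1 / 2) * (X q a * Y q b + X q b * Y q a) := by
    funext q; simp only [sy]; ring
  have d1 := fun a => cdiff (hX a) p
  have d2 := fun a => cdiff (hY a) p
  unfold covD2 covD1
  rw [e, pd_const_mul c _ (((d1 a).fun_mul (d2 b)).fun_add ((d1 b).fun_mul (d2 a))),
    pd_add c ((d1 a).fun_mul (d2 b)) ((d1 b).fun_mul (d2 a)), pd_mul c (d1 a) (d2 b),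
    pd_mul c (d1 b) (d2 a)]
  simp only [Fin.sum_univ_four, sy]
  ring

theorem sy_smooth {X Y : Pt → Fin 4 → ℝ}
    (hX : ∀ a, ContDiffOn ℝ (⊤ : ℕ∞) (fun p => X p a) Set.univ)
    (hY : ∀ a, ContDiffOn ℝ (⊤ : ℕ∞) (fun p => Y p a) Set.univ) (a b : Fin 4) :
    ContDiffOn ℝ (⊤ : ℕ∞) (fun p => sy X Y p a b) Set.univ :=
  (((hX a).mul (hY b)).add ((hX b).mul (hY a))).div_const 2

theorem sy_killing {X Y : Pt → Fin 4 → ℝ} (hX : IsKillingVector HH Set.univ X)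
    (hY : IsKillingVector HH Set.univ Y) : IsKillingTensor HH Set.univ (sy X Y) := by
  refine ⟨sy_smooth hX.1 hY.1, fun p a b => by simp only [sy]; ring, fun p _ a b c => ?_⟩
  simp only [covD2_sy hX.1 hY.1]
  have x := hX.2 p trivial
  have y := hY.2 p trivial
  linear_combination (Y p b * x c a + X p b * y c a + Y p a * x c b + X p a * y c b
    + Y p c * x a b + X p c * y a b) / 2

theorem covD2_add {S T : Pt → Fin 4 → Fin 4 → ℝ}
    (hS : ∀ a b, ContDiffOn ℝ (⊤ : ℕ∞) (fun p => S p a b) Set.univ)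
    (hT : ∀ a b, ContDiffOn ℝ (⊤ : ℕ∞) (fun p => T p a b) Set.univ) (p : Pt) (c a b : Fin 4) :
    covD2 HH (S + T) p c a b = covD2 HH S p c a b + covD2 HH T p c a b := by
  unfold covD2
  have e : (fun q => (S + T) q a b) = fun q => S q a b + T q a b := rfl
  rw [e, pd_add c (cdiff (hS a b) p) (cdiff (hT a b) p)]
  simp only [Fin.sum_univ_four, Pi.add_apply]
  ring

theorem covD2_mul {f : Pt → ℝ} {S : Pt → Fin 4 → Fin 4 → ℝ}
    (hf : ContDiffOn ℝ (⊤ : ℕ∞) f Set.univ)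
    (hS : ∀ a b, ContDiffOn ℝ (⊤ : ℕ∞) (fun p => S p a b) Set.univ) (p : Pt) (c a b : Fin 4) :
    covD2 HH (fun q a b => f q * S q a b) p c a b
      = pd c f p * S p a b + f p * covD2 HH S p c a b := by
  unfold covD2
  rw [pd_mul c (cdiff hf p) (cdiff (hS a b) p)]
  simp only [Fin.sum_univ_four]
  ring

/-- Killing tensors as a submodule. -/
def KT : Submodule ℝ (Pt → Fin 4 → Fin 4 → ℝ) where
  carrier := {K | IsKillingTensor HH Set.univ K}
  add_mem' := by
    intro S T hS hT
    simp only [Set.mem_ofPred_eq] at hS hT ⊢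
    refine ⟨fun a b => (hS.1 a b).add (hT.1 a b), fun p a b => ?_, fun p _ a b c => ?_⟩
    · simp only [Pi.add_apply]
      rw [hS.2.1 p a b, hT.2.1 p a b]
    · simp only [covD2_add hS.1 hT.1]
      linarith [hS.2.2 p trivial a b c, hT.2.2 p trivial a b c]
  zero_mem' := by
    simp only [Set.mem_ofPred_eq]
    refine ⟨fun a b => contDiffOn_const, fun p a b => rfl, fun p _ a b c => ?_⟩
    simp only [covD2, Pi.zero_apply, pd_const]
    simp
  smul_mem' := by
    intro r S hS
    simp only [Set.mem_ofPred_eq] at hS ⊢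
    refine ⟨fun a b => contDiffOn_const.mul (hS.1 a b), fun p a b => ?_, fun p _ a b c => ?_⟩
    · simp only [Pi.smul_apply]
      rw [hS.2.1 p a b]
    · have e : r • S = fun q a b => (fun _ : Pt => r) q * S q a b := rfl
      rw [e]
      simp only [covD2_mul (f := fun _ : Pt => r) contDiffOn_const hS.1, pd_const]
      linear_combination r * hS.2.2 p trivial a b c

theorem mem_KT {K : Pt → Fin 4 → Fin 4 → ℝ} : K ∈ KT ↔ IsKillingTensor HH Set.univ K := Iff.rfl

theorem coord_smooth (j : Fin 4) : ContDiff ℝ (⊤ : ℕ∞) (fun q : Pt => q j) := contDiff_apply ℝ ℝ j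

/-- The two families of oscillator type Killing vectors. -/
def XF (j : Fin 4) (φ ψ : ℝ → ℝ) : Pt → Fin 4 → ℝ :=
  fun p b => if b = 0 then φ (p 0) * p j else if b = j then ψ (p 0) else 0

theorem XF_killing2 (φ ψ : ℝ → ℝ) (hφ : ContDiff ℝ (⊤ : ℕ∞) φ) (hψ : ContDiff ℝ (⊤ : ℕ∞) ψ)
    (j : Fin 4) (ε : ℝ) (hj : (j = 2 ∧ ε = 1) ∨ (j = 3 ∧ ε = -1))
    (h1 : ∀ u, HasDerivAt φ (ε * ψ u) u) (h2 : ∀ u, HasDerivAt ψ (- φ u) u) :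
    IsKillingVector HH Set.univ (XF j φ ψ) := by
  have s1 : ContDiff ℝ (⊤ : ℕ∞) (fun q : Pt => φ (q 0)) := hφ.comp (coord_smooth 0)
  have s2 : ContDiff ℝ (⊤ : ℕ∞) (fun q : Pt => ψ (q 0)) := hψ.comp (coord_smooth 0)
  refine ⟨fun a => ?_, fun p _ a b => ?_⟩
  · unfold XF
    split_ifs
    · exact (s1.mul (coord_smooth j)).contDiffOn
    · exact s2.contDiffOn
    · exact contDiffOn_const
  · have D1 : ∀ i, pd i (fun q : Pt => φ (q 0) * q j) p
        = φ (p 0) * (if i = j then 1 else 0) + p j * (if i = 0 then ε * ψ (p 0) else 0) := by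
      intro i
      rw [pd_mul i (cdiff s1.contDiffOn p) (cdiff (coord_smooth j).contDiffOn p), pd_coord,
        pd_comp_coord i 0 (h1 (p 0))]
    have D2 : ∀ i, pd i (fun q : Pt => ψ (q 0)) p = if i = 0 then - φ (p 0) else 0 :=
      fun i => pd_comp_coord i 0 (h2 (p 0))
    unfold covD1 XF
    rcases hj with ⟨rfl, rfl⟩ | ⟨rfl, rfl⟩ <;> fin_cases a <;> fin_cases b <;>
      simp [Fin.sum_univ_four, Gamma, pdHH, D1, D2, pd_const]

def XP : Pt → Fin 4 → ℝ := fun p => ![-2 * HH p, -1, 0, 0]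
def XQ : Pt → Fin 4 → ℝ := fun _ => ![-1, 0, 0, 0]

theorem HH_smooth : ContDiff ℝ (⊤ : ℕ∞) HH :=
  (((coord_smooth 2).pow 2).sub ((coord_smooth 3).pow 2)).div_const 2

theorem XP_killing : IsKillingVector HH Set.univ XP := by
  have s1 : ContDiff ℝ (⊤ : ℕ∞) (fun q : Pt => -2 * HH q) := contDiff_const.mul HH_smooth
  refine ⟨fun a => ?_, fun p _ a b => ?_⟩
  · fin_cases a
    · exact s1.contDiffOn
    · exact contDiffOn_const
    · exact contDiffOn_const
    · exact contDiffOn_const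
  · have D1 : ∀ i, pd i (fun q : Pt => -2 * HH q) p = -2 * pd i HH p := fun i =>
      pd_const_mul i _ (cdiff HH_smooth.contDiffOn p)
    unfold covD1 XP
    fin_cases a <;> fin_cases b <;>
      simp [-neg_mul, Fin.sum_univ_four, Gamma, D1, pd_const] <;> simp [pdHH] <;> ring

theorem XQ_cov (p : Pt) (a b : Fin 4) : covD1 HH XQ p a b = 0 := by
  unfold covD1 XQ
  simp only [pd_const]
  fin_cases a <;> fin_cases b <;> simp [Fin.sum_univ_four, Gamma]

theorem XQ_killing : IsKillingVector HH Set.univ XQ :=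
  ⟨fun _ => contDiffOn_const, fun p _ a b => by rw [XQ_cov, XQ_cov]; simp⟩

def XX : Fin 6 → Pt → Fin 4 → ℝ :=
  ![XP, XQ, XF 2 Real.sin Real.cos, XF 2 (fun u => - Real.cos u) Real.sin,
    XF 3 (fun u => - Real.sinh u) Real.cosh, XF 3 (fun u => - Real.cosh u) Real.sinh]

theorem XX_killing (i : Fin 6) : IsKillingVector HH Set.univ (XX i) := by
  fin_cases i
  · exact XP_killing
  · exact XQ_killing
  · exact XF_killing2 _ _ Real.contDiff_sin Real.contDiff_cos 2 1 (Or.inl ⟨rfl, rfl⟩)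
      (fun u => (Real.hasDerivAt_sin u).congr_deriv (by ring)) Real.hasDerivAt_cos
  · exact XF_killing2 _ _ Real.contDiff_cos.neg Real.contDiff_sin 2 1 (Or.inl ⟨rfl, rfl⟩)
      (fun u => (Real.hasDerivAt_cos u).neg.congr_deriv (by ring))
      (fun u => (Real.hasDerivAt_sin u).congr_deriv (by ring))
  · exact XF_killing2 _ _ Real.contDiff_sinh.neg Real.contDiff_cosh 3 (-1) (Or.inr ⟨rfl, rfl⟩)
      (fun u => (Real.hasDerivAt_sinh u).neg.congr_deriv (by ring))
      (fun u => (Real.hasDerivAt_cosh u).congr_deriv (by ring))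
  · exact XF_killing2 _ _ Real.contDiff_cosh.neg Real.contDiff_sinh 3 (-1) (Or.inr ⟨rfl, rfl⟩)
      (fun u => (Real.hasDerivAt_cosh u).neg.congr_deriv (by ring))
      (fun u => (Real.hasDerivAt_sinh u).congr_deriv (by ring))

theorem g_killing : IsKillingTensor HH Set.univ (ppMetric HH) := by
  have h : ppMetric HH = (-2 : ℝ) • sy (XX 0) (XX 1) + sy (XX 2) (XX 2) + sy (XX 3) (XX 3)
      + sy (XX 4) (XX 4) + (-1 : ℝ) • sy (XX 5) (XX 5) := by
    funext p a b
    have c1 := Real.sin_sq_add_cos_sq (p 0)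
    have c2 := Real.cosh_sq (p 0)
    simp only [Pi.add_apply, Pi.smul_apply, smul_eq_mul, sy]
    fin_cases a <;> fin_cases b <;>
      simp [ppMetric, XX, XP, XQ, XF, HH] <;>
      first
      | ring1
      | linear_combination (-(p 2)^2) * c1 + (p 3)^2 * c2
      | linear_combination c1
      | linear_combination -c1
      | linear_combination c2
      | linear_combination -c2
  rw [h]
  have s := fun i j => mem_KT.2 (sy_killing (XX_killing i) (XX_killing j))
  exact mem_KT.1 (KT.add_mem (KT.add_mem (KT.add_mem (KT.add_mem (KT.smul_mem _ (s 0 1)) (s 2 2))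
    (s 3 3)) (s 4 4)) (KT.smul_mem _ (s 5 5)))

def Th : Pt → Fin 4 → ℝ := fun p => ![-2 * p 1, 0, p 2, p 3]

theorem Th_smooth (a : Fin 4) : ContDiffOn ℝ (⊤ : ℕ∞) (fun p => Th p a) Set.univ := by
  fin_cases a
  · exact (contDiff_const.mul (coord_smooth 1)).contDiffOn
  · exact contDiffOn_const
  · exact (coord_smooth 2).contDiffOn
  · exact (coord_smooth 3).contDiffOn

theorem Th_cov (p : Pt) (a b : Fin 4) :
    covD1 HH Th p a b + covD1 HH Th p b a = 2 * ppMetric HH p a b := by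
  have D1 : ∀ i, pd i (fun q : Pt => -2 * q 1) p = -2 * pd i (fun q : Pt => q 1) p := fun i =>
      pd_const_mul i _ (cdiff (coord_smooth 1).contDiffOn p)
  unfold covD1 Th
  fin_cases a <;> fin_cases b <;>
    simp [-neg_mul, Fin.sum_univ_four, Gamma, D1, pd_const, pd_coord, pdHH, ppMetric, HH] <;> ring

/-- The irreducible Killing tensor. -/
def WW : Pt → Fin 4 → Fin 4 → ℝ := (fun p a b => p 0 * ppMetric HH p a b) + sy XQ Th

theorem WW_killing : IsKillingTensor HH Set.univ WW := by
  have g := g_killing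
  have u0 : ContDiffOn ℝ (⊤ : ℕ∞) (fun p : Pt => p 0) Set.univ := (coord_smooth 0).contDiffOn
  have m1 : ∀ a b, ContDiffOn ℝ (⊤ : ℕ∞) (fun p : Pt => p 0 * ppMetric HH p a b) Set.univ :=
    fun a b => u0.mul (g.1 a b)
  have m2 := sy_smooth XQ_killing.1 Th_smooth
  have hq : ∀ (p : Pt) a, (if a = 0 then 1 else 0 : ℝ) = - XQ p a := by
    intro p a; fin_cases a <;> simp [XQ]
  refine ⟨fun a b => (m1 a b).add (m2 a b), fun p a b => ?_, fun p _ a b c => ?_⟩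
  · simp only [WW, Pi.add_apply, sy]
    rw [g.2.1 p a b]; ring
  · unfold WW
    simp only [covD2_add m1 m2, covD2_sy XQ_killing.1 Th_smooth, XQ_cov,
      covD2_mul (f := fun p : Pt => p 0) u0 g.1, pd_coord, hq p]
    have t := Th_cov p
    linear_combination p 0 * g.2.2 p trivial a b c + (XQ p a * t b c + XQ p b * t c a
      + XQ p c * t a b) / 2

def II : Fin 21 → Fin 6 := ![0,0,0,0,0,0,2,2,4,1,2,2,1,3,4,1,1,1,3,3,5]
def JJ : Fin 21 → Fin 6 := ![0,2,4,1,3,5,2,4,4,2,3,5,4,4,5,1,3,5,3,5,5]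
def RR : Fin 21 → Pt → Fin 4 → Fin 4 → ℝ := fun i => sy (XX (II i)) (XX (JJ i))
def BB : Fin 22 → Pt → Fin 4 → Fin 4 → ℝ := Fin.snoc RR WW

theorem RR_killing (i : Fin 21) : IsKillingTensor HH Set.univ (RR i) :=
  sy_killing (XX_killing _) (XX_killing _)

theorem BB_cast (i : Fin 21) : BB i.castSucc = RR i := by simp [BB]
theorem BB_last : BB (Fin.last 21) = WW := Fin.snoc_last (α := fun _ => Pt → Fin 4 → Fin 4 → ℝ) WW RR

theorem BB_killing (i : Fin 22) : IsKillingTensor HH Set.univ (BB i) := by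
  induction i using Fin.lastCases with
  | last => rw [BB_last]; exact WW_killing
  | cast i => rw [BB_cast]; exact RR_killing i

end

section

theorem sum21 (f : Fin 21 → ℝ) : ∑ i, f i = f 0 + f 1 + f 2 + f 3 + f 4 + f 5 + f 6 + f 7 + f 8
    + f 9 + f 10 + f 11 + f 12 + f 13 + f 14 + f 15 + f 16 + f 17 + f 18 + f 19 + f 20 := by
  simp only [Fin.sum_univ_succ, Fin.sum_univ_zero]
  simp only [Fin.succ_zero_eq_one, Fin.reduceSucc]
  ring

/-- Values of the combinations of the basis at `u = 0`. -/
theorem evalS (c : Fin 21 → ℝ) (w v y z : ℝ) (S : Fin 4 → Fin 4 → ℝ)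
    (hS : ∀ a b, S a b = (∑ i, c i * RR i ![0, v, y, z] a b) + w * WW ![0, v, y, z] a b) :
    S 1 1 = c 0 ∧ -2 * S 1 2 = c 1 ∧ -2 * S 1 3 = c 2 ∧
    2 * S 0 1 - 2 * ((y * y - z * z) * S 1 1) = c 3 + c 4 * y + c 5 * z ∧
    S 2 2 = c 6 ∧ 2 * S 2 3 = c 7 ∧ S 3 3 = c 8 ∧
    -2 * S 0 2 + 2 * ((y * y - z * z) * S 1 2) = c 9 + (c 10 + w) * y + c 11 * z ∧
    -2 * S 0 3 + 2 * ((y * y - z * z) * S 1 3) = c 12 + c 13 * y + (c 14 + w) * z ∧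
    S 0 0 - 2 * ((y * y - z * z) * S 0 1) + (y * y - z * z) * (y * y - z * z) * S 1 1
      = c 15 + c 16 * y + c 17 * z + c 18 * (y * y) + c 19 * (y * z) + c 20 * (z * z)
        + 2 * w * v := by
  simp only [hS, sum21]
  simp [RR, II, JJ, XX, sy, XP, XQ, XF, WW, Th, ppMetric, HH]
  refine ⟨?_, ?_, ?_, ?_, ?_, ?_, ?_⟩ <;> ring


theorem indep (c : Fin 21 → ℝ) (w : ℝ)
    (h : ∀ p : Pt, ∀ a b, (∑ i, c i * RR i p a b) + w * WW p a b = 0) : c = 0 ∧ w = 0 := by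
  have e := fun v y z => evalS c w v y z (fun _ _ => 0) (fun a b => (h _ a b).symm)
  have e0 := e 0 0 0
  have e1 := e 1 0 0
  have e2 := e 0 1 0
  have e3 := e 0 (-1) 0
  have e4 := e 0 0 1
  have e5 := e 0 0 (-1)
  have e6 := e 0 1 1
  clear e h
  norm_num at e0 e1 e2 e3 e4 e5 e6
  obtain ⟨f0, f1, f2, f3, f4, f5, f6, f7, f8, f9⟩ := e0
  have g1 := e1.2.2.2.2.2.2.2.2.2
  obtain ⟨-, -, -, a3, -, -, -, a7, a8, a9⟩ := e2
  obtain ⟨-, -, -, b3, -, -, -, b7, b8, b9⟩ := e3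
  obtain ⟨-, -, -, l3, -, -, -, l7, l8, l9⟩ := e4
  obtain ⟨-, -, -, m3, -, -, -, m7, m8, m9⟩ := e5
  obtain ⟨-, -, -, n3, -, -, -, n7, n8, n9⟩ := e6
  have hw : w = 0 := by linarith
  refine ⟨?_, hw⟩
  funext i
  fin_cases i <;> simp <;> linarith

end

section

/-- Quadratic form of a Killing tensor on the velocity `(-1, n, q, r)`. -/
def QF (K : Pt → Fin 4 → Fin 4 → ℝ) (x : Pt) (n q r : ℝ) : ℝ :=
  K x 0 0 - 2 * (K x 0 1 * n) - 2 * (K x 0 2 * q) - 2 * (K x 0 3 * r)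
    + K x 1 1 * (n * n) + 2 * (K x 1 2 * (n * q)) + 2 * (K x 1 3 * (n * r))
    + K x 2 2 * (q * q) + 2 * (K x 2 3 * (q * r)) + K x 3 3 * (r * r)

theorem conserved {K : Pt → Fin 4 → Fin 4 → ℝ} (hK : IsKillingTensor HH Set.univ K)
    (u1 : ℝ) (v n y q z r : ℝ → ℝ)
    (hv : ∀ s, HasDerivAt v (n s) s) (hn : ∀ s, HasDerivAt n (2 * y s * q s - 2 * z s * r s) s)
    (hy : ∀ s, HasDerivAt y (q s) s) (hq : ∀ s, HasDerivAt q (- y s) s)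
    (hz : ∀ s, HasDerivAt z (r s) s) (hr : ∀ s, HasDerivAt r (z s) s) (s0 : ℝ) :
    QF K ![u1 - s0, v s0, y s0, z s0] (n s0) (q s0) (r s0)
      = QF K ![u1, v 0, y 0, z 0] (n 0) (q 0) (r 0) := by
  let x : ℝ → Pt := fun s => ![u1 - s, v s, y s, z s]
  have hx : ∀ s, HasDerivAt x ![-1, n s, q s, r s] s := by
    intro s
    rw [hasDerivAt_pi]
    intro i
    fin_cases i
    · exact (hasDerivAt_id s).const_sub u1
    · exact hv s
    · exact hy s
    · exact hz s
  have hf : ∀ (a b : Fin 4) s, HasDerivAt (fun s => K (x s) a b)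
      (-(TT.U (kc hK a b)).1 (x s) + n s * (TT.V (kc hK a b)).1 (x s)
        + q s * (TT.Y (kc hK a b)).1 (x s) + r s * (TT.Z (kc hK a b)).1 (x s)) s := by
    intro a b s
    have := (Sm_diff (kc hK a b) (x s)).hasFDerivAt.comp_hasDerivAt s (hx s)
    rw [fderiv_expand] at this
    refine HasDerivAt.congr_deriv this ?_
    change _ = -pd 0 _ _ + n s * pd 1 _ _ + q s * pd 2 _ _ + r s * pd 3 _ _
    simp
  have hd : ∀ s, HasDerivAt (fun s => QF K (x s) (n s) (q s) (r s)) 0 s := by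
    intro s
    have T := ((((((((((hf 0 0 s).sub (((hf 0 1 s).mul (hn s)).const_mul 2)).sub
      (((hf 0 2 s).mul (hq s)).const_mul 2)).sub (((hf 0 3 s).mul (hr s)).const_mul 2)).add
      ((hf 1 1 s).mul ((hn s).mul (hn s)))).add
      (((hf 1 2 s).mul ((hn s).mul (hq s))).const_mul 2)).add
      (((hf 1 3 s).mul ((hn s).mul (hr s))).const_mul 2)).add
      ((hf 2 2 s).mul ((hq s).mul (hq s)))).add
      (((hf 2 3 s).mul ((hq s).mul (hr s))).const_mul 2)).add
      ((hf 3 3 s).mul ((hr s).mul (hr s))))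
    refine HasDerivAt.congr_deriv T ?_
    have c000 : (TT.U (kc hK 0 0)).1 (x s) = 2 * (y s * K (x s) 0 2) + (-2) * (z s * K (x s) 0 3) :=
      congrFun (congrArg Subtype.val (cv_000 hK)) (x s)
    have c001 : (TT.V (kc hK 0 0)).1 (x s) + 2 * (TT.U (kc hK 0 1)).1 (x s)
        = 2 * (y s * K (x s) 1 2) + (-2) * (z s * K (x s) 1 3) :=
      congrFun (congrArg Subtype.val (cv_001 hK)) (x s)
    have c002 : (TT.Y (kc hK 0 0)).1 (x s) + 2 * (TT.U (kc hK 0 2)).1 (x s)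
        = 4 * (y s * K (x s) 0 1) + 2 * (y s * K (x s) 2 2) + (-2) * (z s * K (x s) 2 3) :=
      congrFun (congrArg Subtype.val (cv_002 hK)) (x s)
    have c003 : (TT.Z (kc hK 0 0)).1 (x s) + 2 * (TT.U (kc hK 0 3)).1 (x s)
        = (-4) * (z s * K (x s) 0 1) + 2 * (y s * K (x s) 2 3) + (-2) * (z s * K (x s) 3 3) :=
      congrFun (congrArg Subtype.val (cv_003 hK)) (x s)
    have c011 : (TT.U (kc hK 1 1)).1 (x s) + 2 * (TT.V (kc hK 0 1)).1 (x s) = 0 :=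
      congrFun (congrArg Subtype.val (cv_011 hK)) (x s)
    have c012 : (TT.U (kc hK 1 2)).1 (x s) + (TT.V (kc hK 0 2)).1 (x s)
        + (TT.Y (kc hK 0 1)).1 (x s) = 2 * (y s * K (x s) 1 1) :=
      congrFun (congrArg Subtype.val (cv_012 hK)) (x s)
    have c013 : (TT.U (kc hK 1 3)).1 (x s) + (TT.V (kc hK 0 3)).1 (x s)
        + (TT.Z (kc hK 0 1)).1 (x s) = (-2) * (z s * K (x s) 1 1) :=
      congrFun (congrArg Subtype.val (cv_013 hK)) (x s)
    have c022 : (TT.U (kc hK 2 2)).1 (x s) + 2 * (TT.Y (kc hK 0 2)).1 (x s)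
        = 4 * (y s * K (x s) 1 2) :=
      congrFun (congrArg Subtype.val (cv_022 hK)) (x s)
    have c023 : (TT.U (kc hK 2 3)).1 (x s) + (TT.Y (kc hK 0 3)).1 (x s)
        + (TT.Z (kc hK 0 2)).1 (x s) = 2 * (y s * K (x s) 1 3) + (-2) * (z s * K (x s) 1 2) :=
      congrFun (congrArg Subtype.val (cv_023 hK)) (x s)
    have c033 : (TT.U (kc hK 3 3)).1 (x s) + 2 * (TT.Z (kc hK 0 3)).1 (x s)
        = (-4) * (z s * K (x s) 1 3) :=
      congrFun (congrArg Subtype.val (cv_033 hK)) (x s)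
    have c111 : (TT.V (kc hK 1 1)).1 (x s) = 0 :=
      congrFun (congrArg Subtype.val (cv_111 hK)) (x s)
    have c112 : (TT.Y (kc hK 1 1)).1 (x s) + 2 * (TT.V (kc hK 1 2)).1 (x s) = 0 :=
      congrFun (congrArg Subtype.val (cv_112 hK)) (x s)
    have c113 : (TT.Z (kc hK 1 1)).1 (x s) + 2 * (TT.V (kc hK 1 3)).1 (x s) = 0 :=
      congrFun (congrArg Subtype.val (cv_113 hK)) (x s)
    have c122 : (TT.V (kc hK 2 2)).1 (x s) + 2 * (TT.Y (kc hK 1 2)).1 (x s) = 0 :=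
      congrFun (congrArg Subtype.val (cv_122 hK)) (x s)
    have c123 : (TT.V (kc hK 2 3)).1 (x s) + (TT.Y (kc hK 1 3)).1 (x s)
        + (TT.Z (kc hK 1 2)).1 (x s) = 0 :=
      congrFun (congrArg Subtype.val (cv_123 hK)) (x s)
    have c133 : (TT.V (kc hK 3 3)).1 (x s) + 2 * (TT.Z (kc hK 1 3)).1 (x s) = 0 :=
      congrFun (congrArg Subtype.val (cv_133 hK)) (x s)
    have c222 : (TT.Y (kc hK 2 2)).1 (x s) = 0 :=
      congrFun (congrArg Subtype.val (cv_222 hK)) (x s)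
    have c223 : (TT.Z (kc hK 2 2)).1 (x s) + 2 * (TT.Y (kc hK 2 3)).1 (x s) = 0 :=
      congrFun (congrArg Subtype.val (cv_223 hK)) (x s)
    have c233 : (TT.Y (kc hK 3 3)).1 (x s) + 2 * (TT.Z (kc hK 2 3)).1 (x s) = 0 :=
      congrFun (congrArg Subtype.val (cv_233 hK)) (x s)
    have c333 : (TT.Z (kc hK 3 3)).1 (x s) = 0 :=
      congrFun (congrArg Subtype.val (cv_333 hK)) (x s)
    simp only [Pi.mul_apply]
    linear_combination (-1) * c000 + n s * c001 + q s * c002 + r s * c003 - (n s) ^ 2 * c011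
      - 2 * n s * q s * c012 - 2 * n s * r s * c013 - (q s) ^ 2 * c022 - 2 * q s * r s * c023
      - (r s) ^ 2 * c033 + (n s) ^ 3 * c111 + (n s) ^ 2 * q s * c112 + (n s) ^ 2 * r s * c113
      + n s * (q s) ^ 2 * c122 + 2 * n s * q s * r s * c123 + n s * (r s) ^ 2 * c133
      + (q s) ^ 3 * c222 + (q s) ^ 2 * r s * c223 + q s * (r s) ^ 2 * c233 + (r s) ^ 3 * c333
  have hc := is_const_of_deriv_eq_zero (fun t => (hd t).differentiableAt) (fun t => (hd t).deriv) s0 0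
  have e : x 0 = ![u1, v 0, y 0, z 0] := by simp [x]
  simp only [e] at hc
  exact hc

theorem vanish {K : Pt → Fin 4 → Fin 4 → ℝ} (hK : IsKillingTensor HH Set.univ K)
    (h0 : ∀ v y z a b, K ![0, v, y, z] a b = 0) (p : Pt) (a b : Fin 4) : K p a b = 0 := by
  have key : ∀ n q r : ℝ, QF K p n q r = 0 := by
    intro n q r
    let y : ℝ → ℝ := fun s => p 2 * Real.cos s + q * Real.sin s
    let yd : ℝ → ℝ := fun s => q * Real.cos s - p 2 * Real.sin s
    let z : ℝ → ℝ := fun s => p 3 * Real.cosh s + r * Real.sinh s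
    let zd : ℝ → ℝ := fun s => r * Real.cosh s + p 3 * Real.sinh s
    let vd : ℝ → ℝ := fun s => (n - (p 2) ^ 2 + (p 3) ^ 2) + (y s * y s - z s * z s)
    let v : ℝ → ℝ := fun s => p 1 + ((n - (p 2) ^ 2 + (p 3) ^ 2)
      + (q ^ 2 + (p 2) ^ 2 + r ^ 2 - (p 3) ^ 2) / 2) * s
      + (p 2 * q + p 3 * r) / 2 - (y s * yd s + z s * zd s) / 2
    have hy : ∀ s, HasDerivAt y (yd s) s := fun s =>
      (((Real.hasDerivAt_cos s).const_mul (p 2)).add ((Real.hasDerivAt_sin s).const_mul q)).congr_deriv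
        (by simp only [yd]; ring)
    have hyd : ∀ s, HasDerivAt yd (- y s) s := fun s =>
      (((Real.hasDerivAt_cos s).const_mul q).sub ((Real.hasDerivAt_sin s).const_mul (p 2))).congr_deriv
        (by simp only [y]; ring)
    have hz : ∀ s, HasDerivAt z (zd s) s := fun s =>
      (((Real.hasDerivAt_cosh s).const_mul (p 3)).add ((Real.hasDerivAt_sinh s).const_mul r)).congr_deriv
        (by simp only [zd]; ring)
    have hzd : ∀ s, HasDerivAt zd (z s) s := fun s =>
      (((Real.hasDerivAt_cosh s).const_mul r).add ((Real.hasDerivAt_sinh s).const_mul (p 3))).congr_deriv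
        (by simp only [z]; ring)
    have hvd : ∀ s, HasDerivAt vd (2 * y s * yd s - 2 * z s * zd s) s := fun s =>
      ((((hy s).mul (hy s)).sub ((hz s).mul (hz s))).const_add _).congr_deriv (by ring)
    have hv : ∀ s, HasDerivAt v (vd s) s := by
      intro s
      have T := (((((hasDerivAt_id s).const_mul ((n - (p 2) ^ 2 + (p 3) ^ 2)
        + (q ^ 2 + (p 2) ^ 2 + r ^ 2 - (p 3) ^ 2) / 2)).const_add (p 1)).add_const
        ((p 2 * q + p 3 * r) / 2))).sub
        ((((hy s).mul (hyd s)).add ((hz s).mul (hzd s))).div_const 2)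
      refine HasDerivAt.congr_deriv T ?_
      have c1 := Real.sin_sq_add_cos_sq s
      have c2 := Real.cosh_sq s
      simp only [vd, y, yd, z, zd]
      linear_combination (-(q ^ 2 + (p 2) ^ 2) / 2) * c1 + (((p 3) ^ 2 - r ^ 2) / 2) * c2
    have C := conserved hK (p 0) v vd y yd z zd hv hvd hy hyd hz hzd (p 0)
    have e0 : ![p 0, v 0, y 0, z 0] = p := by
      funext i
      fin_cases i <;> simp [v, y, z, yd, zd]
    have e1 : vd 0 = n := by simp [vd, y, z]; ring
    have e2 : yd 0 = q := by simp [yd]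
    have e3 : zd 0 = r := by simp [zd]
    rw [e0, e1, e2, e3, sub_self] at C
    rw [← C]
    simp only [QF, h0]
    ring
  have k0 := key 0 0 0
  have k1 := key 1 0 0
  have k2 := key (-1) 0 0
  have k3 := key 0 1 0
  have k4 := key 0 (-1) 0
  have k5 := key 0 0 1
  have k6 := key 0 0 (-1)
  have k7 := key 1 1 0
  have k8 := key 1 0 1
  have k9 := key 0 1 1
  simp only [QF] at k0 k1 k2 k3 k4 k5 k6 k7 k8 k9
  have s := hK.2.1 p
  have s1 := s 1 0
  have s2 := s 2 0
  have s3 := s 3 0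
  have s4 := s 2 1
  have s5 := s 3 1
  have s6 := s 3 2
  fin_cases a <;> fin_cases b <;> simp <;> linarith

end

section

theorem span {K : Pt → Fin 4 → Fin 4 → ℝ} (hK : IsKillingTensor HH Set.univ K) :
    ∃ (c : Fin 21 → ℝ) (w : ℝ), ∀ p a b, K p a b = (∑ i, c i * RR i p a b) + w * WW p a b := by
  obtain ⟨a, p, q, b0, b1, b2, g, k, l, s0, s1, s2, t0, t1, t2, c0, c1, c2, c3, c4, c5, c6, hh⟩ :=
    slice_K hK
  let c : Fin 21 → ℝ := ![a, p, q, b0, b1, b2, g, k, l, s0, s1 - c6 / 2, s2, t0, t1, t2 - c6 / 2,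
    c0, c1, c2, c3, c4, c5]
  let w : ℝ := c6 / 2
  let S : Pt → Fin 4 → Fin 4 → ℝ := (∑ i, c i • RR i) + w • WW
  have hS : ∀ p a b, S p a b = (∑ i, c i * RR i p a b) + w * WW p a b := by
    intro p a b
    simp [S, Finset.sum_apply]
  have hSK : S ∈ KT := KT.add_mem
    (KT.sum_mem fun i _ => KT.smul_mem _ (mem_KT.2 (RR_killing i)))
    (KT.smul_mem _ (mem_KT.2 WW_killing))
  have hD : IsKillingTensor HH Set.univ (K - S) := mem_KT.1 (KT.sub_mem (mem_KT.2 hK) hSK)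
  have hz : ∀ v y z a b, (K - S) ![0, v, y, z] a b = 0 := by
    intro v y z i j
    obtain ⟨e0, e1, e2, e3, e4, e5, e6, e7, e8, e9⟩ := hh v y z
    obtain ⟨f0, f1, f2, f3, f4, f5, f6, f7, f8, f9⟩ :=
      evalS c w v y z (S ![0, v, y, z]) (fun a b => hS _ a b)
    simp only [c, w] at f0 f1 f2 f3 f4 f5 f6 f7 f8 f9
    simp at f0 f1 f2 f3 f4 f5 f6 f7 f8 f9
    set L := K ![0, v, y, z] with hL
    set M := S ![0, v, y, z] with hM
    have d11 : L 1 1 - M 1 1 = 0 := by linarith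
    have d12 : L 1 2 - M 1 2 = 0 := by linarith
    have d13 : L 1 3 - M 1 3 = 0 := by linarith
    have d22 : L 2 2 - M 2 2 = 0 := by linarith
    have d23 : L 2 3 - M 2 3 = 0 := by linarith
    have d33 : L 3 3 - M 3 3 = 0 := by linarith
    have d01 : L 0 1 - M 0 1 = 0 := by
      linear_combination (e3 - f3) / 2 + (y * y - z * z) * d11
    have d02 : L 0 2 - M 0 2 = 0 := by
      linear_combination (f7 - e7) / 2 + (y * y - z * z) * d12
    have d03 : L 0 3 - M 0 3 = 0 := by
      linear_combination (f8 - e8) / 2 + (y * y - z * z) * d13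
    have d00 : L 0 0 - M 0 0 = 0 := by
      linear_combination e9 - f9 + 2 * (y * y - z * z) * d01
        - (y * y - z * z) * (y * y - z * z) * d11
    have sL := hK.2.1 ![0, v, y, z]
    have sM := (mem_KT.1 hSK).2.1 ![0, v, y, z]
    rw [← hL] at sL
    rw [← hM] at sM
    change L i j - M i j = 0
    fin_cases i <;> fin_cases j <;> simp only [Fin.zero_eta, Fin.mk_one, Fin.reduceFinMk] <;>
      first
      | assumption
      | (rw [sL, sM]; assumption)
  refine ⟨c, w, fun p a b => ?_⟩
  have := vanish hD hz p a b
  rw [← hS]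
  exact sub_eq_zero.1 this

theorem kv_v {X : Pt → Fin 4 → ℝ} (hX : IsKillingVector HH Set.univ X) (p : Pt) :
    pd 1 (fun q => X q 0) p = 0 := by
  have hKT := sy_killing hX hX
  have hsq : ∀ q, pd 0 (fun q => sy X X q 1 1) q = 0 := fun q => K11_u hKT q 0
  have hd : ∀ q, DifferentiableAt ℝ (fun q => X q 1) q := fun q => cdiff (hX.1 1) q
  have e : (fun q => sy X X q 1 1) = fun q => X q 1 * X q 1 := by
    funext q; simp only [sy]; ring
  have hall : ∀ q r, X q 1 * X q 1 = X r 1 * X r 1 := by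
    intro q r
    have hdiff : Differentiable ℝ (fun q => X q 1 * X q 1) := fun q => (hd q).fun_mul (hd q)
    refine is_const_of_fderiv_eq_zero hdiff (fun q => ?_) q r
    ext w
    rw [fderiv_expand, ← e, K11_u hKT q 0, K11_u hKT q 1, K11_u hKT q 2, K11_u hKT q 3]
    simp
  have h0 : pd 0 (fun q => X q 1) p = 0 := by
    by_cases hp : X p 1 = 0
    · have : (fun q => X q 1) = fun _ => 0 := by
        funext q
        have := hall q p
        rw [hp] at this
        simpa using this
      rw [this]
      exact pd_const 0 0 p
    · have := hsq p
      rw [e, pd_mul 0 (hd p) (hd p)] at this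
      have h2 : X p 1 * pd 0 (fun q => X q 1) p = 0 := by linarith
      exact (mul_eq_zero.1 h2).resolve_left hp
  have := hX.2 p trivial 0 1
  simp [covD1, Gamma, Fin.sum_univ_four, pdHH] at this
  linarith

theorem kv_const {X : Pt → Fin 4 → ℝ} (hX : IsKillingVector HH Set.univ X) :
    X ![0, 1, 0, 0] 0 = X ![0, 0, 0, 0] 0 := by
  let γ : ℝ → Pt := fun t => ![0, t, 0, 0]
  have hγ : ∀ t, HasDerivAt γ ![0, 1, 0, 0] t := by
    intro t
    rw [hasDerivAt_pi]
    intro i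
    fin_cases i
    · exact hasDerivAt_const t _
    · exact hasDerivAt_id t
    · exact hasDerivAt_const t _
    · exact hasDerivAt_const t _
  have hd : ∀ t, HasDerivAt (fun t => X (γ t) 0) 0 t := by
    intro t
    have := (cdiff (hX.1 0) (γ t)).hasFDerivAt.comp_hasDerivAt t (hγ t)
    rw [fderiv_expand, kv_v hX] at this
    exact HasDerivAt.congr_deriv this (by simp)
  exact is_const_of_deriv_eq_zero (fun t => (hd t).differentiableAt) (fun t => (hd t).deriv) 1 0

theorem red_span {K : Pt → Fin 4 → Fin 4 → ℝ} (hK : IsReducible HH Set.univ K) :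
    ∃ c : Fin 21 → ℝ, ∀ p a b, K p a b = ∑ i, c i * RR i p a b := by
  obtain ⟨c₀, n, d, X, Y, hX, hY, h⟩ := hK
  have hKeq : K = c₀ • ppMetric HH + ∑ i, d i • sy (X i) (Y i) := by
    funext p a b
    rw [h p trivial a b]
    simp [Finset.sum_apply, sy]
  have hKT : K ∈ KT := by
    rw [hKeq]
    exact KT.add_mem (KT.smul_mem _ (mem_KT.2 g_killing))
      (KT.sum_mem fun i _ => KT.smul_mem _ (mem_KT.2 (sy_killing (hX i) (hY i))))
  obtain ⟨c, w, hc⟩ := span (mem_KT.1 hKT)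
  have hv : K ![0, 1, 0, 0] 0 0 = K ![0, 0, 0, 0] 0 0 := by
    rw [h _ trivial, h _ trivial]
    simp only [fun i => kv_const (hX i), fun i => kv_const (hY i)]
    simp [ppMetric, HH]
  have hw : w = 0 := by
    have e1 := (evalS c w 1 0 0 (K ![0, 1, 0, 0]) (fun a b => hc _ a b)).2.2.2.2.2.2.2.2.2
    have e0 := (evalS c w 0 0 0 (K ![0, 0, 0, 0]) (fun a b => hc _ a b)).2.2.2.2.2.2.2.2.2
    rw [hv] at e1
    norm_num at e1 e0
    linarith
  refine ⟨c, fun p a b => ?_⟩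
  rw [hc, hw]
  ring

theorem main11 :
    (∃ B : Fin 22 → Pt → Fin 4 → Fin 4 → ℝ,
      (∀ i, IsKillingTensor HH Set.univ (B i)) ∧
      (∀ c : Fin 22 → ℝ,
        (∀ p ∈ (Set.univ : Set Pt), ∀ a b, (∑ i, c i * B i p a b) = 0) → c = 0) ∧
      (∀ K, IsKillingTensor HH Set.univ K →
        ∃ c : Fin 22 → ℝ, ∀ p ∈ (Set.univ : Set Pt), ∀ a b, K p a b = ∑ i, c i * B i p a b)) ∧
    (∃ R : Fin 21 → Pt → Fin 4 → Fin 4 → ℝ,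
      (∀ i, IsReducible HH Set.univ (R i)) ∧
      (∀ c : Fin 21 → ℝ,
        (∀ p ∈ (Set.univ : Set Pt), ∀ a b, (∑ i, c i * R i p a b) = 0) → c = 0) ∧
      (∀ K, IsReducible HH Set.univ K →
        ∃ c : Fin 21 → ℝ, ∀ p ∈ (Set.univ : Set Pt), ∀ a b, K p a b = ∑ i, c i * R i p a b)) := by
  refine ⟨⟨BB, BB_killing, ?_, ?_⟩, ⟨RR, ?_, ?_, ?_⟩⟩
  · intro c h
    obtain ⟨h1, h2⟩ := indep (fun i => c i.castSucc) (c (Fin.last 21)) (by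
      intro p a b
      have := h p trivial a b
      rw [Fin.sum_univ_castSucc] at this
      simp only [BB_cast, BB_last] at this
      exact this)
    funext i
    induction i using Fin.lastCases with
    | last => exact h2
    | cast i => exact congrFun h1 i
  · intro K hK
    obtain ⟨c, w, h⟩ := span hK
    refine ⟨Fin.snoc c w, fun p _ a b => ?_⟩
    rw [Fin.sum_univ_castSucc, h]
    simp only [BB_cast, BB_last, Fin.snoc_castSucc, Fin.snoc_last]
  · intro i
    refine ⟨0, 1, fun _ => 1, fun _ => XX (II i), fun _ => XX (JJ i), fun _ => XX_killing _,
      fun _ => XX_killing _, fun p _ a b => ?_⟩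
    simp [RR, sy]
  · intro c h
    exact (indep c 0 (fun p a b => by rw [h p trivial a b]; ring)).1
  · intro K hK
    obtain ⟨c, h⟩ := red_span hK
    exact ⟨c, fun p _ a b => h p a b⟩

end

/-- For the vacuum plane wave `2H = y² - z²` on `ℝ⁴`, the space of
Killing tensors has dimension exactly 22 and its subspace of reducible Killing tensors
has dimension exactly 21. -/
theorem stmt11 :
    let H : Pt → ℝ := fun p => ((p 2) ^ 2 - (p 3) ^ 2) / 2
    let U : Set Pt := Set.univ
    (∃ B : Fin 22 → Pt → Fin 4 → Fin 4 → ℝ,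
      (∀ i, IsKillingTensor H U (B i)) ∧
      (∀ c : Fin 22 → ℝ,
        (∀ p ∈ U, ∀ a b, (∑ i, c i * B i p a b) = 0) → c = 0) ∧
      (∀ K, IsKillingTensor H U K →
        ∃ c : Fin 22 → ℝ, ∀ p ∈ U, ∀ a b, K p a b = ∑ i, c i * B i p a b)) ∧
    (∃ R : Fin 21 → Pt → Fin 4 → Fin 4 → ℝ,
      (∀ i, IsReducible H U (R i)) ∧
      (∀ c : Fin 21 → ℝ,
        (∀ p ∈ U, ∀ a b, (∑ i, c i * R i p a b) = 0) → c = 0) ∧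
      (∀ K, IsReducible H U K →
        ∃ c : Fin 21 → ℝ, ∀ p ∈ U, ∀ a b, K p a b = ∑ i, c i * R i p a b)) := by
  exact main11

end
end

section
/- Let I ⊆ ℝ be an open interval, let A : I → ℝ be three times continuously differentiable with A'(u) ≠ 0 for all u ∈ I, and suppose A satisfies 5 (A'')² − 4 A' A''' + 16 A (A')² = 0 on I. Set Γ = |A'|^{−1/4}. Then Γ'' + A Γ = 0 on I, and the symmetric tensor field (K₈)_{ab} = −(2AΓ' + (1/3)A'Γ) y(y²+z²) δ^u_a δ^u_b − 2Γ' y δ_{(a}^u δ_{b)}^v + (2/3)AΓ(3y² + 2z²) δ_{(a}^u δ_{b)}^y + (2/3)AΓ yz δ_{(a}^u δ_{b)}^z + 2Γ δ_{(a}^v δ_{b)}^y − (2/3)Γ' z δ_{(a}^y δ_{b)}^z + (2/3)Γ' y δ^z_a δ^z_b is a Killing tensor of the conformally flat plane wave metric 2H = A(u)(y² + z²) on I × ℝ³. -/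
noncomputable section

/-- The Killing tensor `K₈` of a conformally flat plane wave with profile `A(u)`,
built from a function `Γ(u)`. -/
def KTeight (A Γf : ℝ → ℝ) : Pt → Fin 4 → Fin 4 → ℝ := fun p a b =>
  -(2 * A (p 0) * deriv Γf (p 0) + (1 / 3) * deriv A (p 0) * Γf (p 0))
      * p 2 * ((p 2) ^ 2 + (p 3) ^ 2) * sd 0 0 a b
    - 2 * deriv Γf (p 0) * p 2 * sd 0 1 a b
    + (2 / 3) * A (p 0) * Γf (p 0) * (3 * (p 2) ^ 2 + 2 * (p 3) ^ 2) * sd 0 2 a b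
    + (2 / 3) * A (p 0) * Γf (p 0) * p 2 * p 3 * sd 0 3 a b
    + 2 * Γf (p 0) * sd 1 2 a b
    - (2 / 3) * deriv Γf (p 0) * p 3 * sd 2 3 a b
    + (2 / 3) * deriv Γf (p 0) * p 2 * sd 3 3 a b

def HasPD (i : Fin 4) (f : Pt → ℝ) (p : Pt) (d : ℝ) : Prop :=
  ∃ L : Pt →L[ℝ] ℝ, HasFDerivAt f L p ∧ L (Pi.single i 1) = d

theorem HasPD.pd_eq {i : Fin 4} {f : Pt → ℝ} {p : Pt} {d : ℝ} (h : HasPD i f p d) :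
    pd i f p = d := by
  obtain ⟨L, hL, rfl⟩ := h
  rw [pd, hL.fderiv]

theorem HasPD.add {i : Fin 4} {f g : Pt → ℝ} {p : Pt} {d e : ℝ} (h : HasPD i f p d)
    (k : HasPD i g p e) : HasPD i (fun q => f q + g q) p (d + e) := by
  obtain ⟨L, hL, rfl⟩ := h
  obtain ⟨M, hM, rfl⟩ := k
  exact ⟨_, hL.add hM, by simp⟩

theorem HasPD.sub {i : Fin 4} {f g : Pt → ℝ} {p : Pt} {d e : ℝ} (h : HasPD i f p d)
    (k : HasPD i g p e) : HasPD i (fun q => f q - g q) p (d - e) := by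
  obtain ⟨L, hL, rfl⟩ := h
  obtain ⟨M, hM, rfl⟩ := k
  exact ⟨_, hL.sub hM, by simp⟩

theorem HasPD.neg {i : Fin 4} {f : Pt → ℝ} {p : Pt} {d : ℝ} (h : HasPD i f p d) :
    HasPD i (fun q => - f q) p (-d) := by
  obtain ⟨L, hL, rfl⟩ := h
  exact ⟨_, hL.neg, by simp⟩

theorem HasPD.mul {i : Fin 4} {f g : Pt → ℝ} {p : Pt} {d e : ℝ} (h : HasPD i f p d)
    (k : HasPD i g p e) : HasPD i (fun q => f q * g q) p (d * g p + f p * e) := by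
  obtain ⟨L, hL, rfl⟩ := h
  obtain ⟨M, hM, rfl⟩ := k
  exact ⟨_, hL.mul hM, by simp; ring⟩

theorem HasPD.const (i : Fin 4) (p : Pt) (c : ℝ) : HasPD i (fun _ => c) p 0 :=
  ⟨_, hasFDerivAt_const c p, by simp⟩

theorem HasPD.div2 {i : Fin 4} {f : Pt → ℝ} {p : Pt} {d : ℝ} (h : HasPD i f p d) :
    HasPD i (fun q => f q / 2) p (d / 2) := by
  have := h.mul (HasPD.const i p (1 / 2))
  simpa only [mul_one_div, mul_zero, add_zero] using this

theorem HasPD.coord (i j : Fin 4) (p : Pt) : HasPD i (fun q => q j) p (kd j i) :=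
  ⟨_, hasFDerivAt_apply j p, by simp [kd, Pi.single_apply]⟩

theorem HasPD.sq {i : Fin 4} {f : Pt → ℝ} {p : Pt} {d : ℝ} (h : HasPD i f p d) :
    HasPD i (fun q => f q ^ 2) p (2 * f p * d) := by
  have := h.mul h
  simp only [← pow_two] at this
  convert this using 1
  ring

theorem HasPD.comp {i : Fin 4} {f : ℝ → ℝ} {p : Pt} {d : ℝ} (h : HasDerivAt f d (p 0)) :
    HasPD i (fun q => f (q 0)) p (d * kd 0 i) := by
  obtain ⟨L, hL, h2⟩ := HasPD.coord i 0 p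
  refine ⟨_, HasDerivAt.comp_hasFDerivAt p h hL, ?_⟩
  simp [h2]

set_option maxHeartbeats 4000000 in
theorem killing_eq (A G : ℝ → ℝ) (p : Pt) (a2 : ℝ)
    (hA : HasDerivAt A (deriv A (p 0)) (p 0)) (hA1 : HasDerivAt (deriv A) a2 (p 0))
    (hG : HasDerivAt G (deriv G (p 0)) (p 0))
    (hG1 : HasDerivAt (deriv G) (-(A (p 0) * G (p 0))) (p 0))
    (hrel : 4 * deriv A (p 0) * deriv G (p 0) + a2 * G (p 0) = 0) (a b c : Fin 4) :
    covD2 (fun p => A (p 0) * ((p 2) ^ 2 + (p 3) ^ 2) / 2) (KTeight A G) p c a b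
    + covD2 (fun p => A (p 0) * ((p 2) ^ 2 + (p 3) ^ 2) / 2) (KTeight A G) p a b c
    + covD2 (fun p => A (p 0) * ((p 2) ^ 2 + (p 3) ^ 2) / 2) (KTeight A G) p b c a = 0 := by
  have pA := fun i => HasPD.comp (i := i) hA
  have pA1 := fun i => HasPD.comp (i := i) hA1
  have pG := fun i => HasPD.comp (i := i) hG
  have pG1 := fun i => HasPD.comp (i := i) hG1
  have y := fun i => HasPD.coord i 2 p
  have z := fun i => HasPD.coord i 3 p
  have C := fun i c => HasPD.const i p c
  have hH := fun i => (((pA i).mul ((y i).sq.add (z i).sq)).div2).pd_eq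
  have hK := fun i a b =>
    ((((((((((((C i 2).mul (pA i)).mul (pG1 i)).add (((C i (1/3)).mul (pA1 i)).mul (pG i))).neg.mul
      (y i)).mul ((y i).sq.add (z i).sq)).mul (C i (sd 0 0 a b))).sub
      ((((C i 2).mul (pG1 i)).mul (y i)).mul (C i (sd 0 1 a b)))).add
      (((((C i (2/3)).mul (pA i)).mul (pG i)).mul
        (((C i 3).mul (y i).sq).add ((C i 2).mul (z i).sq))).mul (C i (sd 0 2 a b)))).add
      ((((((C i (2/3)).mul (pA i)).mul (pG i)).mul (y i)).mul (z i)).mul (C i (sd 0 3 a b)))).add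
      (((C i 2).mul (pG i)).mul (C i (sd 1 2 a b)))).sub
      ((((C i (2/3)).mul (pG1 i)).mul (z i)).mul (C i (sd 2 3 a b)))).add
      ((((C i (2/3)).mul (pG1 i)).mul (y i)).mul (C i (sd 3 3 a b)))
  have hK' := fun i a b => (hK i a b).pd_eq
  clear hK pA pA1 pG pG1 y z C hA hA1 hG hG1
  simp only [covD2, Gamma, hH]
  unfold KTeight
  simp only [hK']
  clear hH hK'
  generalize A (p 0) = α at *
  generalize deriv A (p 0) = α1 at *
  generalize G (p 0) = γ at *
  generalize deriv G (p 0) = γ1 at *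
  generalize p 2 = Y at *
  generalize p 3 = Z at *
  fin_cases a <;> fin_cases b <;> fin_cases c <;>
    simp [Fin.sum_univ_four, sd, kd] <;> first
      | done
      | ring1
      | linear_combination (-(Y * (Y ^ 2 + Z ^ 2))) * hrel

theorem K_smooth (U : Set Pt) (f0 f1 f2 f3 : Pt → ℝ)
    (h0 : ContDiffOn ℝ (⊤ : ℕ∞) f0 U) (h1 : ContDiffOn ℝ (⊤ : ℕ∞) f1 U)
    (h2 : ContDiffOn ℝ (⊤ : ℕ∞) f2 U) (h3 : ContDiffOn ℝ (⊤ : ℕ∞) f3 U)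
    (s1 s2 s3 s4 s5 s6 s7 : ℝ) :
    ContDiffOn ℝ (⊤ : ℕ∞) (fun p =>
      -(2 * f0 p * f3 p + (1 / 3) * f1 p * f2 p) * p 2 * ((p 2) ^ 2 + (p 3) ^ 2) * s1
      - 2 * f3 p * p 2 * s2
      + (2 / 3) * f0 p * f2 p * (3 * (p 2) ^ 2 + 2 * (p 3) ^ 2) * s3
      + (2 / 3) * f0 p * f2 p * p 2 * p 3 * s4
      + 2 * f2 p * s5
      - (2 / 3) * f3 p * p 3 * s6
      + (2 / 3) * f3 p * p 2 * s7) U := by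
  fun_prop

theorem gamma_deriv (I : Set ℝ) (hI : IsOpen I) (A : ℝ → ℝ)
    (hAnz : ∀ u ∈ I, deriv A u ≠ 0) (hd : ∀ u ∈ I, DifferentiableAt ℝ (deriv A) u)
    (u : ℝ) (hu : u ∈ I) :
    HasDerivAt (fun u => |deriv A u| ^ (-(1 : ℝ) / 4))
      (|deriv A u| ^ (-(1 : ℝ) / 4) * (deriv (deriv A) u / deriv A u * (-(1:ℝ)/4))) u := by
  have key : ∀ x ∈ I, |deriv A x| ^ (-(1 : ℝ) / 4)
      = Real.exp (Real.log (deriv A x) * (-(1 : ℝ) / 4)) := by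
    intro x hx
    rw [Real.rpow_def_of_pos (abs_pos.2 (hAnz x hx)), Real.log_abs]
  rw [key u hu]
  have h := (((hd u hu).hasDerivAt.log (hAnz u hu)).mul_const (-(1 : ℝ) / 4)).exp
  refine h.congr_of_eventuallyEq ?_
  filter_upwards [hI.mem_nhds hu] with x hx using key x hx

theorem gamma_smooth (I : Set ℝ) (A : ℝ → ℝ)
    (hAnz : ∀ u ∈ I, deriv A u ≠ 0) (hd : ContDiffOn ℝ (⊤ : ℕ∞) (deriv A) I) :
    ContDiffOn ℝ (⊤ : ℕ∞) (fun u => |deriv A u| ^ (-(1 : ℝ) / 4)) I := by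
  have key : ∀ x ∈ I, |deriv A x| ^ (-(1 : ℝ) / 4)
      = Real.exp (Real.log (deriv A x) * (-(1 : ℝ) / 4)) := by
    intro x hx
    rw [Real.rpow_def_of_pos (abs_pos.2 (hAnz x hx)), Real.log_abs]
  exact (((hd.log hAnz).mul contDiffOn_const).exp).congr key

theorem contDiffOn_step (I : Set ℝ) (hI : IsOpen I) (f : ℝ → ℝ) (n : ℕ)
    (hd : DifferentiableOn ℝ f I) :
    ContDiffOn ℝ (n + 1 : ℕ) f I ↔ ContDiffOn ℝ n (deriv f) I := by
  push_cast
  rw [contDiffOn_succ_iff_deriv_of_isOpen hI]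
  simp [hd]

theorem A_smooth (I : Set ℝ) (hI : IsOpen I)
    (A : ℝ → ℝ) (hA : ContDiffOn ℝ 3 A I) (hAnz : ∀ u ∈ I, deriv A u ≠ 0)
    (hode : ∀ u ∈ I,
      5 * (deriv (deriv A) u) ^ 2 - 4 * deriv A u * deriv (deriv (deriv A)) u
        + 16 * A u * (deriv A u) ^ 2 = 0) : ContDiffOn ℝ (⊤ : ℕ∞) A I := by
  have d0 : DifferentiableOn ℝ A I := hA.differentiableOn (by norm_num)
  have c1 : ContDiffOn ℝ (2 : ℕ) (deriv A) I := (contDiffOn_step I hI A 2 d0).1 (by exact_mod_cast hA)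
  have d1 : DifferentiableOn ℝ (deriv A) I := c1.differentiableOn (by norm_num)
  have c2 : ContDiffOn ℝ (1 : ℕ) (deriv (deriv A)) I := (contDiffOn_step I hI _ 1 d1).1 c1
  have d2 : DifferentiableOn ℝ (deriv (deriv A)) I := c2.differentiableOn (by norm_num)
  have main : ∀ n : ℕ, ContDiffOn ℝ (n + 3 : ℕ) A I := by
    intro n
    induction n with
    | zero => exact_mod_cast hA
    | succ n ih =>
      have e1 := (contDiffOn_step I hI A (n + 2) d0).1 ih
      have e2 := (contDiffOn_step I hI _ (n + 1) d1).1 e1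
      rw [show n + 1 + 3 = n + 3 + 1 from rfl, contDiffOn_step I hI _ _ d0,
        contDiffOn_step I hI _ (n + 2) d1, contDiffOn_step I hI _ (n + 1) d2]
      have e0 : ContDiffOn ℝ (n + 1 : ℕ) A I := ih.of_le (by exact_mod_cast (by omega))
      have e1' : ContDiffOn ℝ (n + 1 : ℕ) (deriv A) I := e1.of_le (by exact_mod_cast (by omega))
      have q : ContDiffOn ℝ (n + 1 : ℕ) (fun u => (5 * (deriv (deriv A) u) ^ 2
          + 16 * A u * (deriv A u) ^ 2) / (4 * deriv A u)) I := by
        refine ContDiffOn.div ?_ (contDiffOn_const.mul e1') ?_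
        · exact (contDiffOn_const.mul (e2.pow 2)).add ((contDiffOn_const.mul e0).mul (e1'.pow 2))
        · intro u hu
          simpa using hAnz u hu
      refine q.congr ?_
      intro u hu
      have := hAnz u hu
      rw [eq_div_iff (by simpa using this)]
      linear_combination - hode u hu
  rw [contDiffOn_infty]
  intro n
  exact (main n).of_le (by exact_mod_cast (by omega))

/-- If `A` is `C³` on an open interval `I` with `A' ≠ 0` and satisfies
`5 (A'')² - 4 A' A''' + 16 A (A')² = 0`, then `Γ = |A'|^{-1/4}` satisfies `Γ'' + AΓ = 0`
and the tensor field `K₈` built from `A` and `Γ` is a Killing tensor of the conformally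
flat plane wave `2H = A(u)(y² + z²)` on `I × ℝ³`. -/
theorem stmt18 (I : Set ℝ) (hIopen : IsOpen I) (hIconn : I.OrdConnected)
    (A : ℝ → ℝ) (hA : ContDiffOn ℝ 3 A I) (hAnz : ∀ u ∈ I, deriv A u ≠ 0)
    (hode : ∀ u ∈ I,
      5 * (deriv (deriv A) u) ^ 2 - 4 * deriv A u * deriv (deriv (deriv A)) u
        + 16 * A u * (deriv A u) ^ 2 = 0) :
    let Γf : ℝ → ℝ := fun u => |deriv A u| ^ (-(1 : ℝ) / 4)
    let U : Set Pt := {p | p 0 ∈ I}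
    let H : Pt → ℝ := fun p => A (p 0) * ((p 2) ^ 2 + (p 3) ^ 2) / 2
    (∀ u ∈ I, deriv (deriv Γf) u + A u * Γf u = 0) ∧
    IsKillingTensor H U (KTeight A Γf) := by
  intro Γf U H
  have sA := A_smooth I hIopen A hA hAnz hode
  have sA1 := ((contDiffOn_infty_iff_deriv_of_isOpen hIopen).1 sA).2
  have sA2 := ((contDiffOn_infty_iff_deriv_of_isOpen hIopen).1 sA1).2
  have sG : ContDiffOn ℝ (⊤ : ℕ∞) Γf I := gamma_smooth I A hAnz sA1
  have sG1 := ((contDiffOn_infty_iff_deriv_of_isOpen hIopen).1 sG).2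
  have dif : ∀ {f : ℝ → ℝ}, ContDiffOn ℝ (⊤ : ℕ∞) f I → ∀ u ∈ I, DifferentiableAt ℝ f u :=
    fun h u hu => (h.differentiableOn (by simp)).differentiableAt (hIopen.mem_nhds hu)
  have hG : ∀ u ∈ I, HasDerivAt Γf
      (Γf u * (deriv (deriv A) u / deriv A u * (-(1:ℝ)/4))) u :=
    gamma_deriv I hIopen A hAnz (dif sA1)
  have hG2 : ∀ u ∈ I, deriv (deriv Γf) u + A u * Γf u = 0 := by
    intro u hu
    have nz := hAnz u hu
    have ev : deriv Γf =ᶠ[nhds u] fun u => Γf u * (deriv (deriv A) u / deriv A u * (-(1:ℝ)/4)) := by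
      filter_upwards [hIopen.mem_nhds hu] with x hx using (hG x hx).deriv
    have h2 := (hG u hu).mul ((((dif sA2 u hu).hasDerivAt).div ((dif sA1 u hu).hasDerivAt) nz).mul_const
      (-(1:ℝ)/4))
    have h3 := (h2.congr_of_eventuallyEq ev).deriv
    rw [h3]
    simp only [Pi.div_apply]
    field_simp
    linear_combination (Γf u) * hode u hu
  refine ⟨hG2, ?_, ?_, ?_⟩
  · intro a b
    have c0 : ∀ {f : ℝ → ℝ}, ContDiffOn ℝ (⊤ : ℕ∞) f I →
        ContDiffOn ℝ (⊤ : ℕ∞) (fun p : Pt => f (p 0)) U :=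
      fun h => h.comp (contDiff_apply ℝ ℝ (0 : Fin 4)).contDiffOn (fun p hp => hp)
    have k0 := c0 sA
    have k1 := c0 sA1
    have k2 := c0 sG
    have k3 := c0 sG1
    exact K_smooth U _ _ _ _ k0 k1 k2 k3 _ _ _ _ _ _ _
  · intro p a b
    have : ∀ i j, sd i j a b = sd i j b a := by
      intro i j
      unfold sd
      ring
    simp only [KTeight, this]
  · intro p hp a b c
    refine killing_eq A Γf p (deriv (deriv A) (p 0)) (dif sA _ hp).hasDerivAt
      (dif sA1 _ hp).hasDerivAt (dif sG _ hp).hasDerivAt ?_ ?_ a b c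
    · have := (dif sG1 _ hp).hasDerivAt
      rwa [eq_neg_of_add_eq_zero_left (hG2 _ hp)] at this
    · have nz := hAnz _ hp
      rw [(hG _ hp).deriv]
      field_simp
      ring

end
end
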